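/- arXiv:1909.03927 — 5 statements merged into one kernel-verified Lean document; each statement's English description precedes it below -/
import Mathlib

section
/- For every integer n ≥ 7, the alternating group A_n admits a Beauville structure {(x₁,y₁),(x₂,y₂)} that is not strongly real, i.e. for which there exist no automorphism φ of A_n and elements g₁, g₂ ∈ A_n with gᵢφ(xᵢ)gᵢ⁻¹ = xᵢ⁻¹ and gᵢφ(yᵢ)gᵢ⁻¹ = yᵢ⁻¹ for i = 1, 2. -/
/-- `beauvilleSigma x y` is Σ(x,y): the set of all conjugates of all powers of
`x`, `y` and `x*y` in the group `G`. -/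
def beauvilleSigma {G : Type*} [Group G] (x y : G) : Set G :=
  {a | ∃ (i : ℕ) (g : G),
      a = g * x ^ i * g⁻¹ ∨ a = g * y ^ i * g⁻¹ ∨ a = g * (x * y) ^ i * g⁻¹}

/-- `{(x₁,y₁),(x₂,y₂)}` is a Beauville structure for `G`:
both pairs generate `G` and `Σ(x₁,y₁) ∩ Σ(x₂,y₂) = {1}`. -/
def IsBeauvilleStructure {G : Type*} [Group G] (x₁ y₁ x₂ y₂ : G) : Prop :=
  Subgroup.closure {x₁, y₁} = ⊤ ∧ Subgroup.closure {x₂, y₂} = ⊤ ∧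
    beauvilleSigma x₁ y₁ ∩ beauvilleSigma x₂ y₂ = {1}

/-- A Beauville structure `{(x₁,y₁),(x₂,y₂)}` is strongly real if there are an
automorphism `φ` of `G` and elements `g₁ g₂ : G` with
`gᵢ * φ xᵢ * gᵢ⁻¹ = xᵢ⁻¹` and `gᵢ * φ yᵢ * gᵢ⁻¹ = yᵢ⁻¹` for `i = 1, 2`. -/
def IsStronglyRealStructure {G : Type*} [Group G] (x₁ y₁ x₂ y₂ : G) : Prop :=
  ∃ (φ : G ≃* G) (g₁ g₂ : G),
    g₁ * φ x₁ * g₁⁻¹ = x₁⁻¹ ∧ g₁ * φ y₁ * g₁⁻¹ = y₁⁻¹ ∧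
    g₂ * φ x₂ * g₂⁻¹ = x₂⁻¹ ∧ g₂ * φ y₂ * g₂⁻¹ = y₂⁻¹

/-!
If `y = ⁅x⁻¹, t⁆` for a permutation `t`, then `x * y` is conjugate to `x`, so that the Beauville
condition only involves `x` and `y`. It is enforced by sizes of supports, which conjugation
preserves: with `n = m + 7` and `k ≡ m` modulo 2, the nontrivial powers of the first pair move
`n - 2`, `4`, `5` or `6` points, and also `2` or `n` when `m` is odd, while those of the second pair
move `n - k` or `3`. Both pairs generate `A_n` by Jordan's theorem on primitive groups containing a
3-cycle: a nontrivial block is a union of orbits of the subgroup generated by the 3-cycles, and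
enough 3-cycles are at hand to show that such a union is everything.

The structure is not strongly real because of its first pair, which is chiral: no automorphism
inverts both `x` and `y`. Put `z = x * y * x⁻¹`. Such an automorphism would map `y * z ^ 2`, up to
conjugacy, to the inverse of `y ^ 2 * z`. Since `y` and `z` move only the points `0, …, 6`, the
orders of these two words depend only on the parity of `m`, and they differ.
-/

section

open Equiv Equiv.Perm commutatorElement
open scoped Pointwise

theorem IsStronglyRealStructure.orderOf_mul_conj_eq {G : Type*} [Group G] {x₁ y₁ x₂ y₂ : G}
    (h : IsStronglyRealStructure x₁ y₁ x₂ y₂) (a b : ℕ) :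
    orderOf (y₁ ^ a * (x₁ * y₁ * x₁⁻¹) ^ b) = orderOf (y₁ ^ b * (x₁ * y₁ * x₁⁻¹) ^ a) := by
  obtain ⟨φ, g, -, hx, hy, -⟩ := h
  let ψ : G ≃* G := φ.trans (MulAut.conj g)
  have hψx : ψ x₁ = x₁⁻¹ := hx
  have hψy : ψ y₁ = y₁⁻¹ := hy
  calc orderOf (y₁ ^ a * (x₁ * y₁ * x₁⁻¹) ^ b)
      = orderOf (x₁ * ψ (y₁ ^ a * (x₁ * y₁ * x₁⁻¹) ^ b) * x₁⁻¹) := by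
        rw [← MulAut.conj_apply x₁ (ψ _), MulEquiv.orderOf_eq, MulEquiv.orderOf_eq]
    _ = orderOf (y₁ ^ b * (x₁ * y₁ * x₁⁻¹) ^ a)⁻¹ := by
        congr 1
        simp only [map_mul, map_pow, map_inv, hψx, hψy, conj_pow]
        group
    _ = orderOf (y₁ ^ b * (x₁ * y₁ * x₁⁻¹) ^ a) := orderOf_inv _

theorem mul_commutatorElement_inv {G : Type*} [Group G] (x t : G) :
    x * ⁅x⁻¹, t⁆ = t * x * t⁻¹ := by
  simp only [commutatorElement_def]
  group

theorem conj_viaEmbeddingHom {α β : Type*} {e : α ↪ β} {x : Perm β} {s g : Perm α}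
    (h : ∀ i, g i ≠ i → x (e i) = e (s i)) :
    x * viaEmbeddingHom e g * x⁻¹ = viaEmbeddingHom e (s * g * s⁻¹) := by
  rw [mul_inv_eq_iff_eq_mul]
  ext b
  simp only [Perm.mul_apply, viaEmbeddingHom_apply]
  by_cases hb : ∃ i, e i = b ∧ g i ≠ i
  · obtain ⟨i, rfl, hi⟩ := hb
    have hgi : g (g i) ≠ g i := fun hgi ↦ hi (g.injective hgi)
    rw [viaEmbedding_apply, h _ hgi, h _ hi, viaEmbedding_apply]
    simp
  push Not at hb
  have hgb : viaEmbedding g e b = b := by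
    by_cases hbe : b ∈ Set.range e
    · obtain ⟨i, rfl⟩ := hbe
      rw [viaEmbedding_apply, hb i rfl]
    · exact viaEmbedding_apply_of_notMem g e b hbe
  have hxb : viaEmbedding (s * g * s⁻¹) e (x b) = x b := by
    by_cases hxe : x b ∈ Set.range e
    · obtain ⟨j, hj⟩ := hxe
      have hgj : g (s⁻¹ j) = s⁻¹ j := by
        by_contra hgj
        refine hgj (hb _ (x.injective ?_))
        rw [h _ hgj, ← Perm.mul_apply, mul_inv_cancel, Perm.one_apply, hj]
      rw [← hj, viaEmbedding_apply, Perm.mul_apply, Perm.mul_apply, hgj]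
      simp
    · exact viaEmbedding_apply_of_notMem _ e _ hxe
  rw [hgb, hxb]

section Support

variable {α : Type*} [Fintype α] [DecidableEq α]

/-- The sizes of the supports of the nontrivial powers of `g`. They depend only on the conjugacy
class of `g`, and separate the two halves of a Beauville structure for an alternating group. -/
def powSupportCards (g : Perm α) : Set ℕ :=
  {j | ∃ k : ℕ, g ^ k ≠ 1 ∧ (g ^ k).support.card = j}

theorem powSupportCards_conj (g h : Perm α) :
    powSupportCards (g * h * g⁻¹) = powSupportCards h := by
  simp only [powSupportCards, conj_pow, card_support_conj, ne_eq, conj_eq_one_iff]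

theorem powSupportCards_one : powSupportCards (1 : Perm α) = ∅ := by
  simp [powSupportCards]

theorem powSupportCards_subset_of_isCycle {g : Perm α} (hg : g.IsCycle) :
    powSupportCards g ⊆ {g.support.card} := by
  rintro _ ⟨k, hk, rfl⟩
  rw [hg.support_pow_eq_iff.2 (mt orderOf_dvd_iff_pow_eq_one.1 hk), Set.mem_singleton_iff]

theorem powSupportCards_mul_subset {f g : Perm α} (h : f.Disjoint g) :
    powSupportCards (f * g) ⊆
      powSupportCards f ∪ powSupportCards g ∪ (powSupportCards f + powSupportCards g) := by
  rintro _ ⟨k, hk, rfl⟩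
  rw [h.commute.mul_pow, (h.pow_disjoint_pow k k).card_support_mul]
  rw [h.commute.mul_pow] at hk
  by_cases hf : f ^ k = 1
  · refine .inl (.inr ⟨k, ?_, ?_⟩) <;> simp_all
  by_cases hg : g ^ k = 1
  · refine .inl (.inl ⟨k, hf, ?_⟩)
    simp [hg]
  · exact .inr (Set.add_mem_add ⟨k, hf, rfl⟩ ⟨k, hg, rfl⟩)

theorem card_support_viaEmbeddingHom {β : Type*} [Fintype β] [DecidableEq β] (e : α ↪ β)
    (g : Perm α) : (viaEmbeddingHom e g).support.card = g.support.card := by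
  convert card_support_extend_domain (Equiv.ofInjective e e.injective) (g := g)
  simp only [viaEmbeddingHom_apply, viaEmbedding]
  congr!

theorem powSupportCards_viaEmbeddingHom {β : Type*} [Fintype β] [DecidableEq β] (e : α ↪ β)
    (g : Perm α) : powSupportCards (viaEmbeddingHom e g) = powSupportCards g := by
  simp only [powSupportCards, ← map_pow, card_support_viaEmbeddingHom, ne_eq,
    map_eq_one_iff _ (viaEmbeddingHom_injective e)]

theorem card_support_mem_of_mem_beauvilleSigma {x y a : alternatingGroup α}
    (ha : a ∈ beauvilleSigma x y) (ha1 : a ≠ 1) :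
    (a : Perm α).support.card ∈
      powSupportCards (x : Perm α) ∪ powSupportCards (y : Perm α) ∪
        powSupportCards (x * y : Perm α) := by
  obtain ⟨i, g, h⟩ := ha
  rcases h with rfl | rfl | rfl <;>
    rw [ne_eq, conj_eq_one_iff, ← OneMemClass.coe_eq_one] at ha1 <;>
    push_cast at ha1 ⊢ <;> rw [card_support_conj]
  exacts [.inl (.inl ⟨i, ha1, rfl⟩), .inl (.inr ⟨i, ha1, rfl⟩), .inr ⟨i, ha1, rfl⟩]

end Support

section Generation

variable {α : Type*} [Fintype α] [DecidableEq α] {H : Subgroup (Perm α)} {B : Set α}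

/-- `B` is a union of orbits of the subgroup generated by the 3-cycles in `H`, expressed without
naming that subgroup: a 3-cycle of `H` moving a point of `B` has its whole support in `B`. -/
def IsThreeCycleClosed (H : Subgroup (Perm α)) (B : Set α) : Prop :=
  ∀ g ∈ H, g.IsThreeCycle → ∀ ⦃a b⦄, a ∈ B → g a ≠ a → g b ≠ b → b ∈ B

theorem isThreeCycle_eq_or_apply_eq {g : Perm α} (hg : g.IsThreeCycle) {a b : α} (ha : g a ≠ a)
    (hb : g b ≠ b) : b = a ∨ b = g a ∨ g b = a := by
  obtain ⟨i, hi, rfl⟩ := (hg.isCycle.sameCycle ha hb).exists_pow_eq'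
  rw [hg.orderOf] at hi
  have h3 : g ^ 3 = 1 := hg.orderOf ▸ pow_orderOf_eq_one g
  interval_cases i
  · exact .inl rfl
  · exact .inr (.inl (by rw [pow_one]))
  · exact .inr (.inr (by rw [← Perm.mul_apply, ← pow_succ', h3, Perm.one_apply]))

theorem isThreeCycleClosed_orbit (H : Subgroup (Perm α)) (a : α) :
    IsThreeCycleClosed H (MulAction.orbit H a) := by
  rintro g hgH hg b c hb hgb hgc
  obtain ⟨i, rfl⟩ := hg.isCycle.sameCycle hgb hgc
  exact MulAction.mem_orbit_of_mem_orbit (⟨g ^ i, zpow_mem hgH i⟩ : H) hb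

theorem isThreeCycleClosed_of_isBlock (hB : MulAction.IsBlock H B) (hB' : B.Nontrivial) :
    IsThreeCycleClosed H B := by
  intro g hgH hg a b ha hga hgb
  have hgB : g • B = B := by
    have smul_eq {c : α} (hc : c ∈ B) (hgc : g c ∈ B) : g • B = B :=
      hB.smul_eq_of_mem (g := ⟨g, hgH⟩) hc hgc
    obtain ⟨c, hc, hca⟩ := hB'.exists_ne a
    by_cases hgc : g c = c
    · exact smul_eq hc (hgc.symm ▸ hc)
    · rcases isThreeCycle_eq_or_apply_eq hg hga hgc with rfl | rfl | rfl
      exacts [absurd rfl hca, smul_eq ha hc, smul_eq hc ha]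
  rcases isThreeCycle_eq_or_apply_eq hg hga hgb with rfl | rfl | rfl
  · exact ha
  · exact hgB ▸ Set.smul_mem_smul_set ha
  · rw [← hgB] at ha
    exact Set.smul_mem_smul_set_iff.1 ha

theorem alternatingGroup_le_of_isThreeCycleClosed
    (hH : ∀ B, IsThreeCycleClosed H B → B.Nonempty → B = Set.univ)
    {c : Perm α} (hc : c.IsThreeCycle) (hcH : c ∈ H) : alternatingGroup α ≤ H := by
  have : MulAction.IsPreprimitive H α :=
    { exists_smul_eq a b := by
        have := hH _ (isThreeCycleClosed_orbit H a) ⟨a, MulAction.mem_orbit_self a⟩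
        exact MulAction.mem_orbit_iff.1 (this ▸ Set.mem_univ b)
      isTrivialBlock_of_isBlock {B} hB := B.subsingleton_or_nontrivial.imp_right fun hB' ↦
        hH B (isThreeCycleClosed_of_isBlock hB hB') hB'.nonempty }
  exact alternatingGroup_le_of_isPreprimitive_of_isThreeCycle_mem this hc hcH

namespace IsThreeCycleClosed

theorem mem_iff (hB : IsThreeCycleClosed H B) {g : Perm α} (hgH : g ∈ H) (hg : g.IsThreeCycle)
    {a b : α} (ha : g a ≠ a) (hb : g b ≠ b) : a ∈ B ↔ b ∈ B :=
  ⟨fun h ↦ hB g hgH hg h ha hb, fun h ↦ hB g hgH hg h hb ha⟩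

theorem preimage (hB : IsThreeCycleClosed H B) {x : Perm α} (hx : x ∈ H) :
    IsThreeCycleClosed H (x ⁻¹' B) := by
  intro g hgH hg a b ha hga hgb
  refine hB (x * g * x⁻¹) (mul_mem (mul_mem hx hgH) (inv_mem hx)) ?_ ha ?_ ?_
  · rwa [IsThreeCycle, cycleType_conj]
  all_goals simpa

theorem mem_iff_of_sameCycle (hB : IsThreeCycleClosed H B) {x c : Perm α} (hx : x ∈ H)
    (hcH : c ∈ H) (hc : c.IsThreeCycle) {a b : α} (ha : c a ≠ a) (hxa : c (x a) ≠ x a)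
    (hab : x.SameCycle a b) : a ∈ B ↔ b ∈ B := by
  obtain ⟨i, rfl⟩ := hab.exists_nat_pow_eq
  clear hab
  induction i generalizing B with
  | zero => rfl
  | succ i ih =>
    calc a ∈ B ↔ x a ∈ B := hB.mem_iff hcH hc ha hxa
      _ ↔ (x ^ i) a ∈ x ⁻¹' B := ih (hB.preimage hx)
      _ ↔ (x ^ (i + 1)) a ∈ B := by rw [pow_succ']; rfl

end IsThreeCycleClosed

theorem alternatingGroup_le_of_sameCycle_or_isThreeCycle {x c : Perm α} {a : α} (hx : x ∈ H)
    (hcH : c ∈ H) (hc : c.IsThreeCycle) (ha : c a ≠ a) (hxa : c (x a) ≠ x a)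
    (h : ∀ b, x.SameCycle a b ∨ ∃ g ∈ H, g.IsThreeCycle ∧ g a ≠ a ∧ g b ≠ b) :
    alternatingGroup α ≤ H := by
  refine alternatingGroup_le_of_isThreeCycleClosed (fun B hB ⟨b₀, hb₀⟩ ↦ ?_) hc hcH
  have mem_iff (b : α) : a ∈ B ↔ b ∈ B := by
    rcases h b with hab | ⟨g, hgH, hg, hga, hgb⟩
    · exact hB.mem_iff_of_sameCycle hx hcH hc ha hxa hab
    · exact hB.mem_iff hgH hg hga hgb
  exact Set.eq_univ_of_forall fun b ↦ (mem_iff b).1 ((mem_iff b₀).2 hb₀)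

end Generation

section Criterion

variable {α : Type*} [Fintype α] [DecidableEq α]

theorem closure_eq_top_of_le_closure_image_coe {G : Type*} [Group G] {K : Subgroup G} {s : Set K}
    (h : K ≤ Subgroup.closure ((↑) '' s)) : Subgroup.closure s = ⊤ := by
  refine Subgroup.map_injective K.subtype_injective (le_antisymm ?_ ?_)
  · exact Subgroup.map_mono le_top
  · rw [MonoidHom.map_closure, ← MonoidHom.range_eq_map, Subgroup.range_subtype]
    exact h

/-- The commutator `⁅g, t⁆`, which is even whatever the parities of `g` and `t`. -/
def evenCommutator (g t : Perm α) : alternatingGroup α :=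
  ⟨⁅g, t⁆, by
    rw [mem_alternatingGroup, map_commutatorElement, commutatorElement_eq_one_iff_mul_comm,
      mul_comm]⟩

theorem isBeauvilleStructure_evenCommutator {x₁ x₂ : alternatingGroup α} {t₁ t₂ : Perm α}
    (h₁ : alternatingGroup α ≤ Subgroup.closure {(x₁ : Perm α), ⁅(x₁ : Perm α)⁻¹, t₁⁆})
    (h₂ : alternatingGroup α ≤ Subgroup.closure {(x₂ : Perm α), ⁅(x₂ : Perm α)⁻¹, t₂⁆})
    (hd : Disjoint (powSupportCards (x₁ : Perm α) ∪ powSupportCards ⁅(x₁ : Perm α)⁻¹, t₁⁆)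
      (powSupportCards (x₂ : Perm α) ∪ powSupportCards ⁅(x₂ : Perm α)⁻¹, t₂⁆)) :
    IsBeauvilleStructure x₁ (evenCommutator x₁⁻¹ t₁) x₂ (evenCommutator x₂⁻¹ t₂) := by
  have closure_eq_top {x : alternatingGroup α} {t : Perm α}
      (h : alternatingGroup α ≤ Subgroup.closure {(x : Perm α), ⁅(x : Perm α)⁻¹, t⁆}) :
      Subgroup.closure {x, evenCommutator x⁻¹ t} = ⊤ :=
    closure_eq_top_of_le_closure_image_coe (by rwa [Set.image_pair])
  have card_mem {x a : alternatingGroup α} {t : Perm α}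
      (ha : a ∈ beauvilleSigma x (evenCommutator x⁻¹ t)) (ha1 : a ≠ 1) :
      (a : Perm α).support.card ∈
        powSupportCards (x : Perm α) ∪ powSupportCards ⁅(x : Perm α)⁻¹, t⁆ := by
    have := card_support_mem_of_mem_beauvilleSigma ha ha1
    simp only [evenCommutator, mul_commutatorElement_inv, powSupportCards_conj] at this
    exact this.elim id .inl
  refine ⟨closure_eq_top h₁, closure_eq_top h₂, Set.eq_singleton_iff_unique_mem.2 ⟨?_, ?_⟩⟩
  · exact ⟨⟨0, 1, by simp⟩, ⟨0, 1, by simp⟩⟩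
  · rintro a ⟨ha₁, ha₂⟩
    by_contra ha
    exact Set.disjoint_left.1 hd (card_mem ha₁ ha) (card_mem ha₂ ha)

end Criterion

theorem powSupportCards_cycleIcc_subset {n : ℕ} {i j : Fin n} (hij : i < j) :
    powSupportCards (Fin.cycleIcc i j) ⊆ {(j - i + 1 : ℕ)} := by
  have hcard : (Fin.cycleIcc i j).support.card = j - i + 1 := by
    rw [← sum_cycleType, Fin.cycleType_cycleIcc_of_lt hij, Multiset.sum_singleton]
  exact hcard ▸ powSupportCards_subset_of_isCycle (Fin.isCycle_cycleIcc hij)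

theorem sameCycle_last_of_apply_eq_add_one {n : ℕ} {x : Perm (Fin (n + 1))} {i j : Fin (n + 1)}
    (hx : ∀ k, i ≤ k → k < Fin.last n → x k = k + 1) (hij : i ≤ j) :
    x.SameCycle j (Fin.last n) := by
  induction j using Fin.reverseInduction with
  | last => rfl
  | cast j ih =>
    rw [← sameCycle_apply_left, hx _ hij j.castSucc_lt_last, Fin.coeSucc_eq_succ]
    exact ih (hij.trans j.castSucc_lt_succ.le)

section AchiralPair

variable {n : ℕ} {i : Fin (n + 3)}

theorem commutatorElement_cycleIcc_last_swap (hi : i = 0 ∨ i = 1) :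
    ⁅(Fin.cycleIcc i (Fin.last (n + 2)))⁻¹, swap 0 1⁆ = swap 0 (Fin.last (n + 2)) * swap 0 1 := by
  have h01 : (0 : Fin (n + 3)) < 1 := Fin.zero_lt_one
  have h0 : (0 : Fin (n + 3)) < Fin.last (n + 2) := Fin.last_pos
  rw [commutatorElement_def, swap_inv, ← swap_apply_apply]
  congr 1
  rcases hi with rfl | rfl
  · rw [swap_comm]
    congr 1 <;> rw [Perm.inv_eq_iff_eq]
    · rw [Fin.cycleIcc_of_ge_of_lt le_rfl h0, zero_add]
    · rw [Fin.cycleIcc_of_last h0.le]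
  · congr 1 <;> rw [Perm.inv_eq_iff_eq]
    · rw [Fin.cycleIcc_of_lt h01]
    · rw [Fin.cycleIcc_of_last (Fin.le_last 1)]

theorem isThreeCycle_swap_zero_last_mul_swap_zero_one :
    (swap 0 (Fin.last (n + 2)) * swap 0 1).IsThreeCycle :=
  isThreeCycle_swap_mul_swap_same (by simp [Fin.ext_iff]) (by simp) (by simp [Fin.ext_iff])

theorem alternatingGroup_le_closure_cycleIcc_last (hi : i = 0 ∨ i = 1) :
    alternatingGroup (Fin (n + 3)) ≤ Subgroup.closure {Fin.cycleIcc i (Fin.last (n + 2)),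
      ⁅(Fin.cycleIcc i (Fin.last (n + 2)))⁻¹, swap 0 1⁆} := by
  rw [commutatorElement_cycleIcc_last_swap hi]
  have hc := isThreeCycle_swap_zero_last_mul_swap_zero_one (n := n)
  set x := Fin.cycleIcc i (Fin.last (n + 2))
  set c := swap 0 (Fin.last (n + 2)) * swap 0 1
  have hi1 : i ≤ 1 := by rcases hi with rfl | rfl <;> simp
  have hc0 : c 0 ≠ 0 := by simp [c, Fin.ext_iff, swap_apply_def]
  have hc1 : c 1 ≠ 1 := by simp [c, Fin.ext_iff]
  have hclast : c (Fin.last _) ≠ Fin.last _ := by simp [c, Fin.ext_iff, swap_apply_def]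
  have hxlast : x (Fin.last _) = i := Fin.cycleIcc_of_last (Fin.le_last i)
  have hcH : c ∈ Subgroup.closure {x, c} := Subgroup.subset_closure (by simp)
  have hxH : x ∈ Subgroup.closure {x, c} := Subgroup.subset_closure (by simp)
  refine alternatingGroup_le_of_sameCycle_or_isThreeCycle hxH hcH hc hclast ?_ fun b ↦ ?_
  · rw [hxlast]
    rcases hi with rfl | rfl
    exacts [hc0, hc1]
  · rcases eq_or_ne b 0 with rfl | hb
    · exact .inr ⟨c, hcH, hc, hclast, hc0⟩
    · refine .inl (sameCycle_last_of_apply_eq_add_one (i := i) ?_ ?_).symm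
      · exact fun k hik hk ↦ Fin.cycleIcc_of_ge_of_lt hik hk
      · exact hi1.trans (Fin.one_le_of_ne_zero hb)

theorem powSupportCards_cycleIcc_last_union_subset (hi : i = 0 ∨ i = 1) :
    powSupportCards (Fin.cycleIcc i (Fin.last (n + 2))) ∪
      powSupportCards ⁅(Fin.cycleIcc i (Fin.last (n + 2)))⁻¹, swap (0 : Fin (n + 3)) 1⁆ ⊆
        {(n + 3 - i : ℕ), 3} := by
  have hilast : i < Fin.last (n + 2) := by
    rcases hi with rfl | rfl <;> simp [Fin.lt_def]
  have hlen : n + 2 - i + 1 = n + 3 - (i : ℕ) := by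
    have := i.is_lt
    rw [Fin.lt_def, Fin.val_last] at hilast
    omega
  rw [commutatorElement_cycleIcc_last_swap hi]
  refine Set.union_subset_union ?_ ?_
  · exact hlen ▸ powSupportCards_cycleIcc_subset hilast
  · have hc := isThreeCycle_swap_zero_last_mul_swap_zero_one (n := n)
    have hsub := powSupportCards_subset_of_isCycle hc.isCycle
    rwa [hc.card_support] at hsub

end AchiralPair

section ChiralPair

/-- The first generator of the chiral pair on `m + 7` points: the cycle `(2 3 … m + 6)`, multiplied
by the transposition `(0 1)` when `k = 1`. It is even when `k` has the parity of `m`. -/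
def chiralPerm (m : ℕ) (k : Fin 2) : Perm (Fin (m + 7)) :=
  swap 0 1 ^ (k : ℕ) * Fin.cycleIcc 2 (Fin.last (m + 6))

/-- The seven point case of `chiralPerm`, on which the properties of the chiral pair that involve
only seven points of `Fin (m + 7)` are computed. -/
def chiralModel (k : Fin 2) : Perm (Fin 7) := chiralPerm 0 k

/-- The conjugator `t` in the chiral pair `x, ⁅x⁻¹, t⁆`. It was found by a search for a permutation
that serves both parities of `m` and for which `⁅x⁻¹, t⁆` moves only the points `0, …, 6`. -/
def chiralConjugator : Perm (Fin 7) := c[0, 3, 4, 1, 5]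

/-- The second generator of the chiral pair, on seven points. -/
def chiralCommutator (k : Fin 2) : Perm (Fin 7) := ⁅(chiralModel k)⁻¹, chiralConjugator⁆

/-- The conjugate of `chiralCommutator k` by the first generator. -/
def chiralCommutatorConj (k : Fin 2) : Perm (Fin 7) :=
  chiralModel k * chiralCommutator k * (chiralModel k)⁻¹

/-- The extension of a permutation of `Fin 7` to `Fin (m + 7)` by the identity. -/
noncomputable def extendFinSeven (m : ℕ) : Perm (Fin 7) →* Perm (Fin (m + 7)) :=
  viaEmbeddingHom (Fin.castLEEmb (Nat.le_add_left 7 m))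

variable {m : ℕ} {k : Fin 2}

theorem sign_chiralPerm : sign (chiralPerm m k) = (-1) ^ (k + m : ℕ) := by
  have hval : ((2 : Fin (m + 7)) : ℕ) = 2 := rfl
  rw [chiralPerm, Perm.sign_mul, map_pow, sign_swap (by simp),
    Fin.sign_cycleIcc_of_le (Fin.le_last 2), hval, Fin.val_last, pow_add,
    Nat.add_sub_assoc (by norm_num), pow_add _ m, Even.neg_one_pow (by decide : Even (6 - 2)),
    mul_one]

theorem swap_zero_one_pow_apply {a : Fin (m + 7)} (ha : 2 ≤ a) (i : ℕ) :
    ((swap 0 1 : Perm (Fin (m + 7))) ^ i) a = a := by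
  have h12 : (1 : Fin (m + 7)) < 2 := Fin.mk_lt_mk.2 one_lt_two
  have h1a : 1 < a := h12.trans_le ha
  exact pow_apply_eq_self_of_apply_eq_self
    (swap_apply_of_ne_of_ne (Fin.zero_lt_one.trans h1a).ne' h1a.ne') i

theorem disjoint_swap_pow_cycleIcc_two :
    (swap 0 1 ^ (k : ℕ)).Disjoint (Fin.cycleIcc 2 (Fin.last (m + 6))) := by
  intro a
  rcases lt_or_ge a 2 with ha | ha
  · exact .inr (Fin.cycleIcc_of_lt ha)
  · exact .inl (swap_zero_one_pow_apply ha k)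

theorem chiralPerm_apply {a : Fin (m + 7)} (ha : 2 ≤ a) (halast : a < Fin.last _) :
    chiralPerm m k a = a + 1 := by
  rw [chiralPerm, Perm.mul_apply, Fin.cycleIcc_of_ge_of_lt ha halast,
    swap_zero_one_pow_apply (ha.trans (Fin.lt_add_one_iff.2 halast).le)]

theorem cycleIcc_two_castLE {i : Fin 7} (hi : i ≠ 6) :
    Fin.cycleIcc 2 (Fin.last (m + 6)) (i.castLE (Nat.le_add_left 7 m)) =
      (Fin.cycleIcc 2 6 i).castLE (Nat.le_add_left 7 m) := by
  have hi6 : i < 6 := lt_of_le_of_ne (Fin.le_last i) hi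
  have hilast : i.castLE (Nat.le_add_left 7 m) < Fin.last (m + 6) := by
    rw [Fin.lt_def] at hi6 ⊢
    exact hi6.trans_le (Nat.le_add_left 6 m)
  rcases lt_or_ge i 2 with hi2 | hi2
  · rw [Fin.cycleIcc_of_lt hi2, Fin.cycleIcc_of_lt]
    exact hi2
  · rw [Fin.cycleIcc_of_ge_of_lt hi2 hi6, Fin.cycleIcc_of_ge_of_lt _ hilast]
    · ext
      rw [Fin.val_add_one_of_lt hilast, Fin.val_castLE, Fin.val_castLE,
        Fin.val_add_one_of_lt (n := 6) hi6]
    · exact hi2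

theorem chiralPerm_castLE {i : Fin 7} (hi : i ≠ 6) :
    chiralPerm m k (i.castLE (Nat.le_add_left 7 m)) =
      (chiralModel k i).castLE (Nat.le_add_left 7 m) := by
  have hswap (j : Fin 7) : swap 0 1 (j.castLE (Nat.le_add_left 7 m)) =
      (swap 0 1 j).castLE (Nat.le_add_left 7 m) :=
    (Fin.castLE_injective (Nat.le_add_left 7 m)).swap_apply 0 1 j
  rw [chiralPerm, Perm.mul_apply, cycleIcc_two_castLE hi]
  fin_cases k
  · rfl
  · exact hswap _

theorem chiralPerm_conj_extendFinSeven {g : Perm (Fin 7)} (hg : g 6 = 6) :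
    chiralPerm m k * extendFinSeven m g * (chiralPerm m k)⁻¹ =
      extendFinSeven m (chiralModel k * g * (chiralModel k)⁻¹) :=
  conj_viaEmbeddingHom fun _ hi ↦ chiralPerm_castLE fun h ↦ hi (h ▸ hg)

theorem commutatorElement_chiralPerm_inv (m : ℕ) (k : Fin 2) :
    ⁅(chiralPerm m k)⁻¹, extendFinSeven m chiralConjugator⁆ =
      extendFinSeven m (chiralCommutator k) := by
  have h6 : ((chiralModel k)⁻¹ * chiralConjugator * chiralModel k) 6 = 6 := by
    decide +kernel +revert
  have hconj := chiralPerm_conj_extendFinSeven (m := m) (k := k) h6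
  rw [mul_inv_eq_iff_eq_mul, ← eq_inv_mul_iff_mul_eq] at hconj
  rw [chiralCommutator, commutatorElement_def, commutatorElement_def, map_mul, map_inv, inv_inv,
    inv_inv, hconj]
  simp only [mul_assoc, mul_inv_cancel_left, mul_inv_cancel, mul_one]

theorem chiralPerm_conj_chiralCommutator (m : ℕ) (k : Fin 2) :
    chiralPerm m k * extendFinSeven m (chiralCommutator k) * (chiralPerm m k)⁻¹ =
      extendFinSeven m (chiralCommutatorConj k) :=
  chiralPerm_conj_extendFinSeven (by decide +kernel +revert)

theorem powSupportCards_chiralCommutator_subset (k : Fin 2) :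
    powSupportCards (chiralCommutator k) ⊆ {4, 5, 6} := by
  -- The order of `chiralCommutator k` is 4 or 5.
  have hpow : chiralCommutator k ^ 20 = 1 := by decide +kernel +revert
  have hcard : ∀ i < 20, chiralCommutator k ^ i ≠ 1 →
      (chiralCommutator k ^ i).support.card ∈ ({4, 5, 6} : Finset ℕ) := by
    decide +kernel +revert
  rintro _ ⟨i, hi, rfl⟩
  rw [pow_eq_pow_mod i hpow] at hi ⊢
  simpa using hcard (i % 20) (Nat.mod_lt i (by norm_num)) hi

theorem powSupportCards_chiralPerm_subset (m : ℕ) (k : Fin 2) :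
    powSupportCards (chiralPerm m k) ⊆ {j | j = m + 5 ∨ k = 1 ∧ (j = 2 ∨ j = m + 7)} := by
  have hcyc : powSupportCards (Fin.cycleIcc 2 (Fin.last (m + 6))) ⊆ {m + 5} :=
    powSupportCards_cycleIcc_subset (by exact Fin.mk_lt_mk.2 (by omega : 2 < m + 6))
  refine (powSupportCards_mul_subset disjoint_swap_pow_cycleIcc_two).trans ?_
  fin_cases k
  · rintro j ((hj | hj) | ⟨a, ha, -⟩)
    · simp [powSupportCards_one] at hj
    · exact .inl (hcyc hj)
    · simp [powSupportCards_one] at ha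
  · have hswap : powSupportCards (swap 0 1 : Perm (Fin (m + 7))) ⊆ {2} := by
      have h01 : (0 : Fin (m + 7)) ≠ 1 := Fin.zero_ne_one
      have hsub := powSupportCards_subset_of_isCycle (isCycle_swap h01)
      rwa [card_support_swap h01] at hsub
    rintro j ((hj | hj) | ⟨a, ha, b, hb, rfl⟩)
    · exact .inr ⟨rfl, .inl (hswap hj)⟩
    · exact .inl (hcyc hj)
    · obtain rfl : a = 2 := hswap ha
      obtain rfl : b = m + 5 := hcyc hb
      exact .inr ⟨rfl, .inr (by ring)⟩

theorem orderOf_chiralCommutator_mul_sq_ne (k : Fin 2) :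
    orderOf (chiralCommutator k * chiralCommutatorConj k ^ 2) ≠
      orderOf (chiralCommutator k ^ 2 * chiralCommutatorConj k) := by
  -- The exponents 5 and 7 are the orders on the right; those on the left are 4 and 6.
  have hne : (chiralCommutator k * chiralCommutatorConj k ^ 2) ^ (5 + 2 * k : ℕ) ≠ 1 := by
    decide +kernel +revert
  have heq : (chiralCommutator k ^ 2 * chiralCommutatorConj k) ^ (5 + 2 * k : ℕ) = 1 := by
    decide +kernel +revert
  intro h
  rw [ne_eq, ← orderOf_dvd_iff_pow_eq_one, h, orderOf_dvd_iff_pow_eq_one] at hne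
  exact hne heq

theorem exists_isThreeCycle_moving_zero (k : Fin 2) :
    ∃ c ∈ Subgroup.closure {chiralCommutator k, chiralCommutatorConj k},
      c.IsThreeCycle ∧ c 0 ≠ 0 ∧ c 4 ≠ 4 ∧ c 5 ≠ 5 := by
  have word_mem {S T : Perm (Fin 7)} :
      (S * T * S * T⁻¹ * S⁻¹ * S⁻¹ * T⁻¹) ^ 2 ∈ Subgroup.closure {S, T} := by
    have hS : S ∈ Subgroup.closure {S, T} := Subgroup.subset_closure (by simp)
    have hT : T ∈ Subgroup.closure {S, T} := Subgroup.subset_closure (by simp)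
    exact pow_mem (mul_mem (mul_mem (mul_mem (mul_mem (mul_mem (mul_mem hS hT) hS)
      (inv_mem hT)) (inv_mem hS)) (inv_mem hS)) (inv_mem hT)) 2
  refine ⟨_, word_mem, ?_⟩
  rw [← card_support_eq_three_iff]
  decide +kernel +revert

theorem exists_isThreeCycle_moving_one (k : Fin 2) :
    ∃ c ∈ Subgroup.closure {chiralCommutator k, chiralCommutatorConj k},
      c.IsThreeCycle ∧ c 1 ≠ 1 ∧ c 4 ≠ 4 := by
  have word_mem {S T : Perm (Fin 7)} :
      (S⁻¹ * S⁻¹ * T⁻¹ * S⁻¹ * T⁻¹ * S * T) ^ 2 ∈ Subgroup.closure {S, T} := by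
    have hS : S ∈ Subgroup.closure {S, T} := Subgroup.subset_closure (by simp)
    have hT : T ∈ Subgroup.closure {S, T} := Subgroup.subset_closure (by simp)
    exact pow_mem (mul_mem (mul_mem (mul_mem (mul_mem (mul_mem (mul_mem (inv_mem hS)
      (inv_mem hS)) (inv_mem hT)) (inv_mem hS)) (inv_mem hT)) hS) hT) 2
  refine ⟨_, word_mem, ?_⟩
  rw [← card_support_eq_three_iff]
  decide +kernel +revert

theorem closure_le_comap_extendFinSeven (m : ℕ) (k : Fin 2) :
    Subgroup.closure {chiralCommutator k, chiralCommutatorConj k} ≤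
      (Subgroup.closure {chiralPerm m k, extendFinSeven m (chiralCommutator k)}).comap
        (extendFinSeven m) := by
  have hx : chiralPerm m k ∈
      Subgroup.closure {chiralPerm m k, extendFinSeven m (chiralCommutator k)} :=
    Subgroup.subset_closure (by simp)
  have hy : extendFinSeven m (chiralCommutator k) ∈
      Subgroup.closure {chiralPerm m k, extendFinSeven m (chiralCommutator k)} :=
    Subgroup.subset_closure (by simp)
  rw [Subgroup.closure_le]
  rintro _ (rfl | rfl)
  · exact hy
  · rw [SetLike.mem_coe, Subgroup.mem_comap, ← chiralPerm_conj_chiralCommutator]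
    exact mul_mem (mul_mem hx hy) (inv_mem hx)

theorem isThreeCycle_extendFinSeven {g : Perm (Fin 7)} (hg : g.IsThreeCycle) :
    (extendFinSeven m g).IsThreeCycle := by
  rw [← card_support_eq_three_iff] at hg ⊢
  exact (card_support_viaEmbeddingHom _ g).trans hg

theorem extendFinSeven_apply_ne {g : Perm (Fin 7)} {i : Fin 7} (hi : g i ≠ i) :
    extendFinSeven m g (i.castLE (Nat.le_add_left 7 m)) ≠ i.castLE (Nat.le_add_left 7 m) := by
  have happly : extendFinSeven m g (i.castLE (Nat.le_add_left 7 m)) =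
      (g i).castLE (Nat.le_add_left 7 m) :=
    viaEmbedding_apply g (Fin.castLEEmb (Nat.le_add_left 7 m)) i
  exact happly ▸ (Fin.castLE_injective _).ne hi

theorem alternatingGroup_le_closure_chiral (m : ℕ) (k : Fin 2) :
    alternatingGroup (Fin (m + 7)) ≤ Subgroup.closure
      {chiralPerm m k, ⁅(chiralPerm m k)⁻¹, extendFinSeven m chiralConjugator⁆} := by
  rw [commutatorElement_chiralPerm_inv]
  have h4 : chiralModel k 4 = 5 := by decide +kernel +revert
  obtain ⟨c, hc, hc3, hc0, hc4, hc5⟩ := exists_isThreeCycle_moving_zero k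
  obtain ⟨d, hd, hd3, hd1, hd4⟩ := exists_isThreeCycle_moving_one k
  have hcH := closure_le_comap_extendFinSeven m k hc
  have hdH := closure_le_comap_extendFinSeven m k hd
  have hx4 : chiralPerm m k (Fin.castLE (Nat.le_add_left 7 m) 4) =
      Fin.castLE (Nat.le_add_left 7 m) 5 := by
    rw [chiralPerm_castLE (by decide), h4]
  refine alternatingGroup_le_of_sameCycle_or_isThreeCycle (Subgroup.subset_closure (by simp)) hcH
    (isThreeCycle_extendFinSeven hc3) (extendFinSeven_apply_ne hc4)
    (hx4 ▸ extendFinSeven_apply_ne hc5) fun b ↦ ?_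
  rcases lt_or_ge b 2 with hb | hb
  · have hb01 : b = Fin.castLE (Nat.le_add_left 7 m) 0 ∨
        b = Fin.castLE (Nat.le_add_left 7 m) 1 := by
      have hb' : (b : ℕ) < 2 := hb
      simp only [Fin.ext_iff, Fin.val_castLE]
      omega
    rcases hb01 with rfl | rfl
    · exact .inr ⟨_, hcH, isThreeCycle_extendFinSeven hc3, extendFinSeven_apply_ne hc4,
        extendFinSeven_apply_ne hc0⟩
    · exact .inr ⟨_, hdH, isThreeCycle_extendFinSeven hd3, extendFinSeven_apply_ne hd4,
        extendFinSeven_apply_ne hd1⟩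
  · have hlast {j : Fin (m + 7)} (hj : 2 ≤ j) : (chiralPerm m k).SameCycle j (Fin.last (m + 6)) :=
      sameCycle_last_of_apply_eq_add_one (fun _ ↦ chiralPerm_apply) hj
    exact .inl ((hlast (by exact Fin.mk_le_mk.2 (by norm_num : 2 ≤ 4))).trans (hlast hb).symm)

theorem disjoint_powSupportCards_chiral_achiral {i : Fin (m + 7)} (hik : (i : ℕ) = k)
    (hkm : Even (k + m : ℕ)) :
    Disjoint
      (powSupportCards (chiralPerm m k) ∪
        powSupportCards ⁅(chiralPerm m k)⁻¹, extendFinSeven m chiralConjugator⁆)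
      (powSupportCards (Fin.cycleIcc i (Fin.last (m + 6))) ∪
        powSupportCards ⁅(Fin.cycleIcc i (Fin.last (m + 6)))⁻¹, swap (0 : Fin (m + 7)) 1⁆) := by
  have hk := k.isLt
  have hi : i = 0 ∨ i = 1 := by
    simp only [Fin.ext_iff, Fin.val_zero, Fin.val_one]
    omega
  rw [commutatorElement_chiralPerm_inv, extendFinSeven, powSupportCards_viaEmbeddingHom]
  refine Set.disjoint_left.2 fun j hj₁ hj₂ ↦ ?_
  have hj₁ : (j = m + 5 ∨ k = 1 ∧ (j = 2 ∨ j = m + 7)) ∨ j = 4 ∨ j = 5 ∨ j = 6 :=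
    hj₁.imp (powSupportCards_chiralPerm_subset m k ·)
      (powSupportCards_chiralCommutator_subset k ·)
  have hj₂ : j = m + 4 + 3 - i ∨ j = 3 := powSupportCards_cycleIcc_last_union_subset hi hj₂
  rw [Nat.even_iff] at hkm
  rw [Fin.ext_iff, Fin.val_one] at hj₁
  omega

theorem not_isStronglyRealStructure_chiral {x₁ : alternatingGroup (Fin (m + 7))}
    (hx₁ : (x₁ : Perm (Fin (m + 7))) = chiralPerm m k) (x₂ y₂ : alternatingGroup (Fin (m + 7))) :
    ¬ IsStronglyRealStructure x₁
      (evenCommutator (x₁ : Perm (Fin (m + 7)))⁻¹ (extendFinSeven m chiralConjugator)) x₂ y₂ := by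
  intro h
  have horder := h.orderOf_mul_conj_eq 1 2
  rw [← Subgroup.orderOf_coe, ← Subgroup.orderOf_coe] at horder
  simp only [evenCommutator, Subgroup.coe_mul, Subgroup.coe_pow, Subgroup.coe_inv, hx₁,
    commutatorElement_chiralPerm_inv, chiralPerm_conj_chiralCommutator, pow_one, ← map_pow,
    ← map_mul] at horder
  rw [orderOf_injective (extendFinSeven m) (viaEmbeddingHom_injective _),
    orderOf_injective (extendFinSeven m) (viaEmbeddingHom_injective _)] at horder
  exact orderOf_chiralCommutator_mul_sq_ne k horder

end ChiralPair

end

/-- For every `n ≥ 7`, the alternating group `A_n` admits a Beauville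
structure that is not strongly real. -/
theorem alternatingGroup_exists_non_strongly_real_beauville_structure
    (n : ℕ) (hn : 7 ≤ n) :
    ∃ x₁ y₁ x₂ y₂ : alternatingGroup (Fin n),
      IsBeauvilleStructure x₁ y₁ x₂ y₂ ∧ ¬ IsStronglyRealStructure x₁ y₁ x₂ y₂ := by
  obtain ⟨m, rfl⟩ := Nat.exists_eq_add_of_le' hn
  obtain ⟨k, i, hi, hik, hkm⟩ : ∃ (k : Fin 2) (i : Fin (m + 7)),
      (i = 0 ∨ i = 1) ∧ (i : ℕ) = k ∧ Even (k + m : ℕ) := by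
    rcases m.even_or_odd with hm | hm
    · exact ⟨0, 0, .inl rfl, rfl, by simpa using hm⟩
    · exact ⟨1, 1, .inr rfl, rfl, odd_one.add_odd hm⟩
  let x₁ : alternatingGroup (Fin (m + 7)) :=
    ⟨chiralPerm m k, by rw [Equiv.Perm.mem_alternatingGroup, sign_chiralPerm, hkm.neg_one_pow]⟩
  let x₂ : alternatingGroup (Fin (m + 7)) :=
    ⟨Fin.cycleIcc i (Fin.last (m + 6)), by
      rw [Equiv.Perm.mem_alternatingGroup, Fin.sign_cycleIcc_of_le (Fin.le_last i), hik,
        Fin.val_last, Even.neg_one_pow]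
      rw [Nat.even_iff] at hkm ⊢
      omega⟩
  exact ⟨x₁, _, x₂, _, isBeauvilleStructure_evenCommutator
    (alternatingGroup_le_closure_chiral m k) (alternatingGroup_le_closure_cycleIcc_last hi)
    (disjoint_powSupportCards_chiral_achiral hik hkm),
    not_isStronglyRealStructure_chiral rfl x₂ _⟩
end

section
/- Let n ≥ 7 be odd, and in the alternating group A_n on {1,…,n} let x₂ = (5,4,3,2,1) and y₂ = (3,4,5,6,…,n). Then x₂ and y₂ generate A_n, and their product x₂y₂ = (1,6,7,…,n,3,2) is an (n−2)-cycle. -/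
/-!
Write a `k`-cycle as a list. If two cycles share a block of consecutive points, traversed in
opposite directions, then in their product everything in the block except one end point cancels.
The formula for `y₂ * x₂` is one instance. For generation, put `x = x₂`, `y = y₂`; the cycles
`y * x * y⁻¹` and `z = y ^ 2 * x * y⁻¹ ^ 2` are known explicitly, and the cancellation turns
`x * z⁻¹ ^ 2 * x⁻¹ * (y * x * y⁻¹)⁻¹` into a 3-cycle through the two fixed points of `y`. Since `y`
permutes the other points cyclically, its powers conjugate that 3-cycle to all 3-cycles
`(i, 1, 2)`, and these generate the alternating group.
-/

section

open Equiv Equiv.Perm List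

variable {α : Type*} [DecidableEq α]

theorem formPerm_append_singleton_mul_formPerm_cons (l l' : List α) (a : α) :
    (l ++ [a]).formPerm * (a :: l').formPerm = (l ++ a :: l').formPerm := by
  induction l with
  | nil => simp
  | cons b l ih =>
    cases l with
    | nil => simp
    | cons c l => simpa [mul_assoc] using ih

theorem formPerm_append_cons_mul_formPerm_reverse_append (l m l' : List α) (a : α) :
    (l ++ a :: m).formPerm * (m.reverse ++ a :: l').formPerm = (l ++ a :: l').formPerm := by
  have hinv : (m.reverse ++ [a]).formPerm = ((a :: m).formPerm)⁻¹ := by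
    rw [← formPerm_reverse, reverse_cons]
  rw [← formPerm_append_singleton_mul_formPerm_cons l,
    ← formPerm_append_singleton_mul_formPerm_cons m.reverse, hinv, mul_assoc, mul_inv_cancel_left,
    formPerm_append_singleton_mul_formPerm_cons]

theorem conj_formPerm (σ : Perm α) : ∀ l : List α, σ * l.formPerm * σ⁻¹ = (l.map σ).formPerm
  | [] => by simp
  | [a] => by simp
  | a :: b :: l => by
    have ih := conj_formPerm σ (b :: l)
    rw [map_cons] at ih
    rw [map_cons, map_cons, formPerm_cons_cons, formPerm_cons_cons, ← ih, swap_apply_apply]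
    group

theorem formPerm_five_sq {a b c d e : α} (h : [a, b, c, d, e].Nodup) :
    [a, b, c, d, e].formPerm ^ 2 = [a, c, e, b, d].formPerm := by
  ext i
  simp only [formPerm_cons_cons, formPerm_singleton, mul_one, sq, Perm.mul_apply, swap_apply_def]
  simp only [nodup_cons] at h
  grind

theorem sign_formPerm [Fintype α] {l : List α} (hl : l.Nodup) :
    sign l.formPerm = (-1) ^ (l.length - 1) := by
  induction l with
  | nil => simp
  | cons a l ih =>
    cases l with
    | nil => simp
    | cons b l =>
      have hab : a ≠ b := by grind
      rw [formPerm_cons_cons, Perm.sign_mul, sign_swap hab, ih hl.of_cons]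
      simp [pow_succ']

theorem formPerm_mem_alternatingGroup_iff [Fintype α] {l : List α} (hl : l.Nodup) (hne : l ≠ []) :
    l.formPerm ∈ alternatingGroup α ↔ Odd l.length := by
  have := length_pos_iff.2 hne
  rw [mem_alternatingGroup, sign_formPerm hl, neg_one_pow_eq_one_iff_even (by decide)]
  grind

theorem alternatingGroup_le_of_swap_mul_swap_mem [Fintype α] {H : Subgroup (Perm α)} {a b : α}
    (h : ∀ i ≠ a, swap i a * swap a b ∈ H) : alternatingGroup α ≤ H := by
  have star_mul_star {i j : α} (hi : i ≠ a) (hj : j ≠ a) : swap i a * swap j a ∈ H := by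
    simpa [mul_assoc, Equiv.swap_comm a] using H.mul_mem (h i hi) (H.inv_mem (h j hj))
  have swap_mul_star {i j : α} (hij : i ≠ j) (hj : j ≠ a) : swap i j * swap j a ∈ H := by
    obtain rfl | hi := eq_or_ne i a
    · simp [Equiv.swap_comm i j, H.one_mem]
    · have hconj := swap_mul_swap_mul_swap hi hij
      rw [Equiv.swap_comm i j, ← hconj, Equiv.swap_comm a j, mul_assoc, swap_mul_self, mul_one]
      exact star_mul_star hj hi
  rw [← closure_three_cycles_eq_alternating, Subgroup.closure_le]
  intro σ hσ
  obtain ⟨p, hp⟩ := IsCycle.nonempty_support (IsThreeCycle.isCycle hσ)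
  have hnodup := (IsThreeCycle.nodup_iff_mem_support hσ).2 hp
  rw [(IsThreeCycle.eq_swap_mul_swap_iff_mem_support hσ).2 hp]
  generalize σ p = q, σ (σ p) = r at hnodup ⊢
  obtain rfl | hq := eq_or_ne q a
  · rw [Equiv.swap_comm q r]
    exact star_mul_star (by grind) (by grind)
  · have hpq := swap_mul_star (i := p) (by grind) hq
    have hrq := swap_mul_star (i := r) (by grind) hq
    simpa [mul_assoc, Equiv.swap_comm r q] using H.mul_mem hpq (H.inv_mem hrq)

theorem alternatingGroup_le_of_isCycleOn_compl_pair [Fintype α] {H : Subgroup (Perm α)} {a b i : α}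
    {τ : Perm α} (hτ : τ ∈ H) (ha : τ a = a) (hb : τ b = b) (hcycle : τ.IsCycleOn {a, b}ᶜ)
    (hi : i ∈ ({a, b}ᶜ : Set α)) (hmem : [i, a, b].formPerm ∈ H) : alternatingGroup α ≤ H := by
  refine alternatingGroup_le_of_swap_mul_swap_mem (a := a) (b := b) fun j hj ↦ ?_
  obtain rfl | hjb := eq_or_ne j b
  · simp [Equiv.swap_comm a j, H.one_mem]
  have hj_compl : j ∈ ({a, b}ᶜ : Set α) := by simp [hj, hjb]
  obtain ⟨k, hk⟩ := hcycle.exists_pow_eq' (Set.toFinite _) hi hj_compl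
  have hconj : τ ^ k * [i, a, b].formPerm * (τ ^ k)⁻¹ = [j, a, b].formPerm := by
    simp only [conj_formPerm, map_cons, map_nil, hk, pow_apply_eq_self_of_apply_eq_self ha,
      pow_apply_eq_self_of_apply_eq_self hb]
  have hj_mem : [j, a, b].formPerm ∈ H :=
    hconj ▸ H.mul_mem (H.mul_mem (H.pow_mem hτ k) hmem) (H.inv_mem (H.pow_mem hτ k))
  simpa using hj_mem

theorem card_support_formPerm [Fintype α] {l : List α} (hl : l.Nodup) (hlen : 2 ≤ l.length) :
    l.formPerm.support.card = l.length := by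
  rw [support_formPerm_of_nodup l hl (by rintro x rfl; simp at hlen), toFinset_card_of_nodup hl]

theorem formPerm_mul_formPerm_five {a b c d e : α} {l : List α}
    (h : (a :: b :: c :: d :: e :: l).Nodup) :
    (c :: d :: e :: l).formPerm * [e, d, c, b, a].formPerm = (a :: (l ++ [c, b])).formPerm := by
  have hy : (c :: d :: e :: l).formPerm = (l ++ [c, d, e]).formPerm :=
    formPerm_eq_of_isRotated (by grind) (isRotated_append (l := [c, d, e]))
  have hz : (a :: (l ++ [c, b])).formPerm = (l ++ [c, b, a]).formPerm :=
    formPerm_eq_of_isRotated (by grind)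
      (by simpa using isRotated_append (l := [a]) (l' := l ++ [c, b]))
  rw [hy, hz]
  exact formPerm_append_cons_mul_formPerm_reverse_append l [d, e] [b, a] c

theorem conj_formPerm_inv_sq_mul_formPerm_inv {a b c d e f g : α}
    (h : [a, b, c, d, e, f, g].Nodup) :
    [e, d, c, b, a].formPerm * [g, f, e, b, a].formPerm⁻¹ ^ 2 * [e, d, c, b, a].formPerm⁻¹ *
      [f, e, d, b, a].formPerm⁻¹ = [g, a, b].formPerm := by
  have hinv_sq : [g, f, e, b, a].formPerm⁻¹ ^ 2 = [a, e, g, b, f].formPerm := by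
    rw [← formPerm_reverse]
    exact formPerm_five_sq (by grind)
  have hmap : [a, e, g, b, f].map [e, d, c, b, a].formPerm = [e, d, g, a, f] := by
    have ha : [e, d, c, b, a].formPerm a = e := formPerm_apply_getLast e [d, c, b, a]
    have he : [e, d, c, b, a].formPerm e = d := formPerm_apply_lt_getElem _ (by grind) 0 (by simp)
    have hb : [e, d, c, b, a].formPerm b = a := formPerm_apply_lt_getElem _ (by grind) 3 (by simp)
    have hf : [e, d, c, b, a].formPerm f = f := formPerm_apply_of_notMem (by grind)
    have hg : [e, d, c, b, a].formPerm g = g := formPerm_apply_of_notMem (by grind)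
    simp only [map_cons, map_nil, ha, hb, he, hf, hg]
  have hleft : [e, d, g, a, f].formPerm = [g, a, f, e, d].formPerm :=
    (formPerm_rotate _ (by grind) 2).symm
  have hright : [f, e, d, b, a].formPerm⁻¹ = [d, e, f, a, b].formPerm := by
    rw [← formPerm_reverse]
    exact formPerm_rotate [d, e, f, a, b] (by grind) 3
  rw [hinv_sq, conj_formPerm, hmap, hleft, hright]
  exact formPerm_append_cons_mul_formPerm_reverse_append [g] [f, e, d] [b] a

theorem formPerm_three_mem_closure_formPerm_five {a b c d e f g : α} {l : List α}
    (h : (a :: b :: c :: d :: e :: f :: g :: l).Nodup) :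
    [g, a, b].formPerm ∈
      Subgroup.closure {[e, d, c, b, a].formPerm, (c :: d :: e :: f :: g :: l).formPerm} := by
  have hy_nodup : (c :: d :: e :: f :: g :: l).Nodup := h.of_cons.of_cons
  have hword := conj_formPerm_inv_sq_mul_formPerm_inv
    (h.sublist (show [a, b, c, d, e, f, g] <+ a :: b :: c :: d :: e :: f :: g :: l by simp))
  set x := [e, d, c, b, a].formPerm with hx
  set y := (c :: d :: e :: f :: g :: l).formPerm
  set H := Subgroup.closure {x, y}
  have hxH : x ∈ H := Subgroup.subset_closure (by simp)
  have hyH : y ∈ H := Subgroup.subset_closure (by simp)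
  have hya : y a = a := formPerm_apply_of_notMem (by grind)
  have hyb : y b = b := formPerm_apply_of_notMem (by grind)
  have hyc : y c = d := formPerm_apply_lt_getElem _ hy_nodup 0 (by simp)
  have hyd : y d = e := formPerm_apply_lt_getElem _ hy_nodup 1 (by simp)
  have hye : y e = f := formPerm_apply_lt_getElem _ hy_nodup 2 (by simp)
  have hyf : y f = g := formPerm_apply_lt_getElem _ hy_nodup 3 (by simp)
  have hconj : y * x * y⁻¹ = [f, e, d, b, a].formPerm := by
    simp only [hx, conj_formPerm, map_cons, map_nil, hya, hyb, hyc, hyd, hye]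
  have hconj_conj : y * (y * x * y⁻¹) * y⁻¹ = [g, f, e, b, a].formPerm := by
    simp only [hconj, conj_formPerm, map_cons, map_nil, hya, hyb, hyd, hye, hyf]
  rw [← hword, ← hconj_conj, ← hconj]
  have hyx : y * x * y⁻¹ ∈ H := H.mul_mem (H.mul_mem hyH hxH) (H.inv_mem hyH)
  have hyyx := H.mul_mem (H.mul_mem hyH hyx) (H.inv_mem hyH)
  exact H.mul_mem (H.mul_mem (H.mul_mem hxH (H.pow_mem (H.inv_mem hyyx) 2)) (H.inv_mem hxH))
    (H.inv_mem hyx)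

theorem alternatingGroup_le_closure_formPerm_five [Fintype α] {a b c d e f g : α} {l : List α}
    (h : (a :: b :: c :: d :: e :: f :: g :: l).Nodup)
    (hmem : ∀ i, i ∈ a :: b :: c :: d :: e :: f :: g :: l) :
    alternatingGroup α ≤
      Subgroup.closure {[e, d, c, b, a].formPerm, (c :: d :: e :: f :: g :: l).formPerm} := by
  have ha : a ∉ c :: d :: e :: f :: g :: l := by grind
  have hb : b ∉ c :: d :: e :: f :: g :: l := by grind
  have hcompl : {i | i ∈ c :: d :: e :: f :: g :: l} = ({a, b}ᶜ : Set α) := by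
    ext i
    refine ⟨?_, fun hi ↦ ?_⟩
    · rintro hi (rfl | rfl)
      exacts [ha hi, hb hi]
    · obtain ⟨hia, hib⟩ := not_or.1 hi
      exact ((mem_cons.1 (hmem i)).resolve_left hia |> mem_cons.1).resolve_left hib
  have hcycle := h.of_cons.of_cons.isCycleOn_formPerm
  rw [hcompl] at hcycle
  have hg : g ∈ ({a, b}ᶜ : Set α) := hcompl ▸ by simp
  exact alternatingGroup_le_of_isCycleOn_compl_pair (Subgroup.subset_closure (by simp))
    (formPerm_apply_of_notMem ha) (formPerm_apply_of_notMem hb) hcycle hg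
    (formPerm_three_mem_closure_formPerm_five h)

theorem finRange_eq_cons_drop_five {n : ℕ} [NeZero n] (hn : 5 ≤ n) :
    finRange n = 0 :: 1 :: 2 :: 3 :: 4 :: (finRange n).drop 5 := by
  obtain ⟨m, rfl⟩ := Nat.exists_eq_add_of_le' hn
  simp only [finRange_succ, map_cons, drop_succ_cons, drop_zero]
  rfl

theorem alternatingGroup_odd_second_pair_general [Fintype α] {a b c d e : α} {l : List α}
    (hnodup : (a :: b :: c :: d :: e :: l).Nodup)
    (hmem : ∀ i, i ∈ a :: b :: c :: d :: e :: l) (hl : 2 ≤ l.length) :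
    (Subgroup.closure {[e, d, c, b, a].formPerm, (c :: d :: e :: l).formPerm} = alternatingGroup α
      ↔ Odd (Fintype.card α)) ∧
    (c :: d :: e :: l).formPerm * [e, d, c, b, a].formPerm = (a :: (l ++ [c, b])).formPerm ∧
    ((c :: d :: e :: l).formPerm * [e, d, c, b, a].formPerm).IsCycle ∧
    ((c :: d :: e :: l).formPerm * [e, d, c, b, a].formPerm).support.card =
      Fintype.card α - 2 := by
  obtain ⟨f, g, l, rfl⟩ : ∃ f g l', l = f :: g :: l' := by
    match l, hl with
    | f :: g :: l, _ => exact ⟨f, g, l, rfl⟩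
  have hcard : Fintype.card α = l.length + 7 := by
    rw [← Finset.card_univ, ← Finset.eq_univ_of_forall fun i ↦ mem_toFinset.2 (hmem i),
      toFinset_card_of_nodup hnodup]
    rfl
  have hprod : (a :: (f :: g :: l ++ [c, b])).Nodup := by grind
  have hx : [e, d, c, b, a].formPerm ∈ alternatingGroup α :=
    (formPerm_mem_alternatingGroup_iff (by grind) (by simp)).2 ⟨2, rfl⟩
  have hy : (c :: d :: e :: f :: g :: l).formPerm ∈ alternatingGroup α ↔ Odd (Fintype.card α) := by
    rw [formPerm_mem_alternatingGroup_iff hnodup.of_cons.of_cons (by simp), hcard]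
    grind
  rw [formPerm_mul_formPerm_five hnodup, ← hy, hcard]
  refine ⟨⟨fun h ↦ h ▸ Subgroup.subset_closure (by simp), fun h ↦ ?_⟩, rfl,
    isCycle_formPerm hprod (by simp), by rw [card_support_formPerm hprod (by simp)]; simp⟩
  refine le_antisymm ?_ (alternatingGroup_le_closure_formPerm_five hnodup hmem)
  rw [Subgroup.closure_le]
  exact Set.pair_subset hx h

end

/-- for odd `n ≥ 7`, in `A_n` the elements `x₂ = (5,4,3,2,1)` and
`y₂ = (3,4,5,…,n)` generate `A_n`, and their product `x₂y₂ = (1,6,7,…,n,3,2)`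
is an `(n−2)`-cycle.  Points `1,…,n` are modelled by `Fin n` (zero-based), cycles by
`List.formPerm`, and since Mathlib's permutation product applies the right-hand
factor first, the paper's product `x₂y₂` (apply `x₂` first) is `y₂ * x₂`. -/
theorem alternatingGroup_odd_second_pair
    (n : ℕ) [NeZero n] (hn : 7 ≤ n) (hodd : Odd n)
    (x₂ y₂ : Equiv.Perm (Fin n))
    (hx₂ : x₂ = List.formPerm [(4 : Fin n), 3, 2, 1, 0])
    (hy₂ : y₂ = List.formPerm ((List.finRange n).drop 2)) :
    Subgroup.closure {x₂, y₂} = alternatingGroup (Fin n) ∧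
    y₂ * x₂ = List.formPerm ((0 : Fin n) :: ((List.finRange n).drop 5 ++ [2, 1])) ∧
    (y₂ * x₂).IsCycle ∧ (y₂ * x₂).support.card = n - 2 := by
  have hcons := finRange_eq_cons_drop_five (n := n) (by lia)
  have hdrop : (List.finRange n).drop 2 = 2 :: 3 :: 4 :: (List.finRange n).drop 5 :=
    congrArg (List.drop 2) hcons
  have hgen := alternatingGroup_odd_second_pair_general (hcons ▸ List.nodup_finRange n)
    (hcons ▸ List.mem_finRange) (by rw [List.length_drop, List.length_finRange]; lia)
  rw [Fintype.card_fin, ← hdrop, ← hx₂, ← hy₂] at hgen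
  exact ⟨hgen.1.2 hodd, hgen.2⟩
end

section
/- Let n ≥ 7 be odd, and in the alternating group A_n on {1,…,n} let x₁ = (1,2,4), y₁ = (1,2,3,4,…,n), x₂ = (5,4,3,2,1) and y₂ = (3,4,5,6,…,n). Then {(x₁,y₁),(x₂,y₂)} is a Beauville structure for A_n. -/
/-- `beauvilleSigmaIn K x y` is Σ(x,y) computed inside the subgroup `K`: the set of all
`K`-conjugates of all powers of `x`, `y` and `x*y`. -/
def beauvilleSigmaIn {G : Type*} [Group G] (K : Subgroup G) (x y : G) : Set G :=
  {a | ∃ (i : ℕ), ∃ g ∈ K,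
      a = g * x ^ i * g⁻¹ ∨ a = g * y ^ i * g⁻¹ ∨ a = g * (x * y) ^ i * g⁻¹}

/-- `{(x₁,y₁),(x₂,y₂)}` is a Beauville structure for the subgroup `K`:
both pairs generate `K` and `Σ(x₁,y₁) ∩ Σ(x₂,y₂) = {1}` (computed within `K`). -/
def IsBeauvilleStructureFor {G : Type*} [Group G] (K : Subgroup G) (x₁ y₁ x₂ y₂ : G) : Prop :=
  Subgroup.closure {x₁, y₁} = K ∧ Subgroup.closure {x₂, y₂} = K ∧
    beauvilleSigmaIn K x₁ y₁ ∩ beauvilleSigmaIn K x₂ y₂ = {1}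

/-!
A transitive group generated by three-cycles is primitive, because a three-cycle preserves every
nontrivial block, so by Jordan's theorem it is the alternating group. Each pair therefore generates
`A_n` as soon as the three-cycles in the group `H` it generates act transitively; since `H` permutes
the orbits of the subgroup they generate, a single three-cycle goes a long way. The first pair
contains a three-cycle that agrees at one point with the `n`-cycle. The second contains one because
the commutator of `x₂` and `y₂` is a double transposition, which can be conjugated to two double
transpositions sharing one transposition.

All of `x₁, y₁, x₁y₁` are cycles of length `3` or `n`, and all of `x₂, y₂, x₂y₂` are cycles of
length `5` or `n - 2`. A nontrivial power of a cycle moves the same points as the cycle, so no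
nontrivial element can lie in both `Σ`-sets.
-/

open Equiv Equiv.Perm List MulAction Subgroup
open scoped Pointwise commutatorElement

section ThreeCycles

variable {α : Type*} [Fintype α] [DecidableEq α]

theorem exists_mem_apply_mem_of_isThreeCycle {σ : Perm α} (hσ : σ.IsThreeCycle) {B : Set α}
    (hB : B.Nontrivial) : ∃ p ∈ B, σ p ∈ B := by
  obtain ⟨p, hp, q, hq, hpq⟩ := hB
  by_contra! hout
  have hnodup : [p, q, σ p, σ q].Nodup := by
    simpa [hpq] using ⟨⟨fun h => hout p hp (h ▸ hp), fun h => hout q hq (h ▸ hp)⟩,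
      fun h => hout p hp (h ▸ hq), fun h => hout q hq (h ▸ hq)⟩
  have hsupp : [p, q, σ p, σ q].toFinset ⊆ σ.support := by
    have hp' : σ p ≠ p := fun h => hout p hp (h.symm ▸ hp)
    have hq' : σ q ≠ q := fun h => hout q hq (h.symm ▸ hq)
    intro r hr
    simp only [mem_toFinset, mem_cons, not_mem_nil, or_false] at hr
    rcases hr with rfl | rfl | rfl | rfl <;> simpa
  have hcard := Finset.card_le_card hsupp
  rw [toFinset_card_of_nodup hnodup, hσ.card_support] at hcard
  simp at hcard

theorem closure_of_isThreeCycle_of_isPretransitive {S : Set (Perm α)}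
    (hS : ∀ σ ∈ S, σ.IsThreeCycle) [IsPretransitive (closure S) α] :
    closure S = alternatingGroup α := by
  refine le_antisymm ((closure_le _).2 fun σ hσ => (hS σ hσ).mem_alternatingGroup) ?_
  obtain rfl | ⟨σ, hσ⟩ := S.eq_empty_or_nonempty
  · have : Subsingleton α := ⟨fun p q => by
      obtain ⟨⟨g, hg⟩, rfl⟩ := exists_smul_eq (closure (∅ : Set (Perm α))) p q
      obtain rfl : g = 1 := by simpa using hg
      rfl⟩
    intro g _
    rw [Subsingleton.elim g 1]
    exact one_mem _
  refine alternatingGroup_le_of_isPreprimitive_of_isThreeCycle_mem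
    { isTrivialBlock_of_isBlock := fun {B} hB => ?_ } (hS σ hσ) (subset_closure hσ)
  refine or_iff_not_imp_left.2 fun hnt => ?_
  have hBnt : B.Nontrivial := Set.not_subsingleton_iff.1 hnt
  have hstab : closure S ≤ stabilizer (Perm α) B := (closure_le _).2 fun τ hτ => by
    obtain ⟨p, hp, hτp⟩ := exists_mem_apply_mem_of_isThreeCycle (hS τ hτ) hBnt
    exact hB.smul_eq_of_mem (g := (⟨τ, subset_closure hτ⟩ : closure S)) hp hτp
  obtain ⟨p, hp⟩ := hBnt.nonempty
  refine Set.eq_univ_of_forall fun q => ?_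
  obtain ⟨⟨g, hg⟩, rfl⟩ := exists_smul_eq (closure S) p q
  exact mem_stabilizer_iff.1 (hstab hg) ▸ Set.smul_mem_smul_set hp

/-- The subgroup generated by the three-cycles of `H`. Since it is normalized by `H`, the elements
of `H` permute its orbits, which is how those orbits are shown to be large. -/
def threeCycleSubgroup (H : Subgroup (Perm α)) : Subgroup (Perm α) :=
  closure {σ | σ ∈ H ∧ σ.IsThreeCycle}

variable {H : Subgroup (Perm α)}

theorem threeCycleSubgroup_le : threeCycleSubgroup H ≤ H :=
  (closure_le _).2 fun _ hσ => hσ.1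

theorem le_normalizer_threeCycleSubgroup : H ≤ normalizer (threeCycleSubgroup H) := by
  refine le_normalizer_closure_iff.2 fun g hg σ ⟨hσ, hσ3⟩ => subset_closure ⟨?_, ?_⟩
  · exact mul_mem (mul_mem hg hσ) (inv_mem hg)
  · rw [← card_support_eq_three_iff, card_support_conj, hσ3.card_support]

theorem orbit_threeCycleSubgroup_apply {σ : Perm α} (hσ : σ ∈ H) (hσ3 : σ.IsThreeCycle) (p : α) :
    orbit (threeCycleSubgroup H) (σ p) = orbit (threeCycleSubgroup H) p :=
  orbit_eq_iff.2 ⟨⟨σ, subset_closure ⟨hσ, hσ3⟩⟩, rfl⟩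

theorem orbit_threeCycleSubgroup_congr {g : Perm α} (hg : g ∈ H) {p q : α}
    (hpq : orbit (threeCycleSubgroup H) p = orbit (threeCycleSubgroup H) q) :
    orbit (threeCycleSubgroup H) (g p) = orbit (threeCycleSubgroup H) (g q) := by
  obtain ⟨⟨σ, hσ⟩, rfl⟩ := orbit_eq_iff.1 hpq
  have hconj := (mem_normalizer_iff.1 (le_normalizer_threeCycleSubgroup hg) σ).1 hσ
  exact orbit_eq_iff.2 ⟨⟨_, hconj⟩, by simp⟩

theorem orbit_threeCycleSubgroup_eq_of_sameCycle {g : Perm α} (hg : g ∈ H) {p q : α}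
    (hp : orbit (threeCycleSubgroup H) (g p) = orbit (threeCycleSubgroup H) p)
    (hpq : g.SameCycle p q) :
    orbit (threeCycleSubgroup H) q = orbit (threeCycleSubgroup H) p := by
  obtain ⟨k, rfl⟩ := hpq.exists_nat_pow_eq
  induction k with
  | zero => rfl
  | succ k ih =>
    rw [pow_succ, Perm.mul_apply]
    exact (orbit_threeCycleSubgroup_congr (pow_mem hg k) hp).trans (ih ⟨k, by simp⟩)

theorem orbit_threeCycleSubgroup_eq_of_sameCycle_of_apply_eq_self {g : Perm α} (hg : g ∈ H)
    {p q r : α} (hr : g r = r)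
    (hpr : orbit (threeCycleSubgroup H) p = orbit (threeCycleSubgroup H) r)
    (hpq : g.SameCycle p q) :
    orbit (threeCycleSubgroup H) q = orbit (threeCycleSubgroup H) r := by
  obtain ⟨k, rfl⟩ := hpq
  simpa [zpow_apply_eq_self_of_apply_eq_self hr k] using
    orbit_threeCycleSubgroup_congr (zpow_mem hg k) hpr

theorem alternatingGroup_le_of_orbit_threeCycleSubgroup_eq (p : α)
    (h : ∀ q, orbit (threeCycleSubgroup H) q = orbit (threeCycleSubgroup H) p) :
    alternatingGroup α ≤ H := by
  have : IsPretransitive (closure {σ | σ ∈ H ∧ σ.IsThreeCycle}) α :=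
    ⟨fun q r => orbit_eq_iff.1 ((h r).trans (h q).symm)⟩
  exact (closure_of_isThreeCycle_of_isPretransitive
    (S := {σ | σ ∈ H ∧ σ.IsThreeCycle}) fun _ hσ => hσ.2).ge.trans threeCycleSubgroup_le

theorem alternatingGroup_le_closure_pair_of_apply_eq {x y : Perm α} {p : α} (hx : x.IsThreeCycle)
    (hxy : x p = y p) (hy : ∀ q, y.SameCycle p q) : alternatingGroup α ≤ closure {x, y} := by
  refine alternatingGroup_le_of_orbit_threeCycleSubgroup_eq p fun q =>
    orbit_threeCycleSubgroup_eq_of_sameCycle (subset_closure (by simp)) ?_ (hy q)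
  rw [← hxy]
  exact orbit_threeCycleSubgroup_apply (subset_closure (by simp)) hx p

end ThreeCycles

section ListCycles

variable {α : Type*} [DecidableEq α]

theorem swap_apply_mul_swap_apply_mem_iff {H : Subgroup (Perm α)} {σ : Perm α} (hσ : σ ∈ H)
    {p q r s : α} : swap (σ p) (σ q) * swap (σ r) (σ s) ∈ H ↔ swap p q * swap r s ∈ H := by
  have hconj : swap (σ p) (σ q) * swap (σ r) (σ s) = σ * (swap p q * swap r s) * σ⁻¹ := by
    rw [swap_apply_apply, swap_apply_apply]
    group
  rw [hconj, mul_mem_cancel_right (inv_mem hσ), mul_mem_cancel_left hσ]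

variable {a b c d e f g : α} {l : List α}

theorem formPerm_triple_mul_formPerm (h : [a, b, c, d].Nodup) :
    formPerm [a, b, d] * formPerm (a :: b :: c :: d :: l) = formPerm (b :: c :: a :: d :: l) := by
  -- Both sides end in `formPerm (d :: l)`, so the identity only concerns four points.
  simp only [formPerm_cons_cons, formPerm_singleton, mul_one, ← mul_assoc]
  congr 1
  ext p
  simp only [Perm.mul_apply, swap_apply_def]
  grind

theorem formPerm_quintuple_mul_formPerm (h : [a, b, c, d, e].Nodup) :
    formPerm [e, d, c, b, a] * formPerm (c :: d :: e :: l) = formPerm (b :: a :: e :: l) := by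
  simp only [formPerm_cons_cons, formPerm_singleton, mul_one, ← mul_assoc]
  congr 1
  ext p
  simp only [Perm.mul_apply, swap_apply_def]
  grind

theorem commutator_formPerm_quintuple_formPerm (h : (a :: b :: c :: d :: e :: f :: l).Nodup) :
    ⁅formPerm [e, d, c, b, a], formPerm (c :: d :: e :: f :: l)⁆ = swap b c * swap e f := by
  have hcomm : Commute (formPerm (f :: l)) (formPerm [e, d, c, b, a]) := by
    refine Disjoint.commute (disjoint_iff_eq_or_eq.2 fun p => ?_)
    by_cases hp : p ∈ f :: l
    · exact .inr (formPerm_apply_of_notMem (by grind))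
    · exact .inl (formPerm_apply_of_notMem hp)
  have hswap : formPerm [e, d, c, b, a] * (swap c d * swap d e * swap e f) =
      swap b c * swap e f * (swap c d * swap d e * swap e f) * formPerm [e, d, c, b, a] := by
    ext p
    simp only [formPerm_cons_cons, formPerm_singleton, mul_one, Perm.mul_apply, swap_apply_def]
    grind
  have hsplit : formPerm (c :: d :: e :: f :: l) =
      swap c d * swap d e * swap e f * formPerm (f :: l) := by
    simp only [formPerm_cons_cons, mul_assoc]
  rw [commutatorElement_def, mul_inv_eq_iff_eq_mul, mul_inv_eq_iff_eq_mul, hsplit, ← mul_assoc,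
    hswap, mul_assoc _ _ (formPerm (f :: l)), ← hcomm.eq]
  simp only [mul_assoc]

theorem swap_mul_swap_mem_closure_formPerm_quintuple
    (h : (a :: b :: c :: d :: e :: f :: g :: l).Nodup) :
    swap e c * swap e g ∈
      closure {formPerm [e, d, c, b, a], formPerm (c :: d :: e :: f :: g :: l)} := by
  set x := formPerm [e, d, c, b, a]
  set y := formPerm (c :: d :: e :: f :: g :: l)
  have hx_mem : x ∈ closure {x, y} := subset_closure (.inl rfl)
  have hy_mem : y ∈ closure {x, y} := subset_closure (.inr rfl)
  have hxl : [e, d, c, b, a].Nodup := by grind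
  have hyl : (c :: d :: e :: f :: g :: l).Nodup := h.sublist (by simp)
  have hya : y a = a := formPerm_apply_of_notMem (by grind)
  have hyb : y b = b := formPerm_apply_of_notMem (by grind)
  have hbc_ef : swap b c * swap e f ∈ closure {x, y} := by
    rw [← commutator_formPerm_quintuple_formPerm h, commutatorElement_def]
    exact mul_mem (mul_mem (mul_mem hx_mem hy_mem) (inv_mem hx_mem)) (inv_mem hy_mem)
  have hab_df : swap a b * swap d f ∈ closure {x, y} := by
    have hxb : x b = a := formPerm_apply_lt_getElem _ hxl 3 (by simp)
    have hxc : x c = b := formPerm_apply_lt_getElem _ hxl 2 (by simp)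
    have hxe : x e = d := formPerm_apply_lt_getElem _ hxl 0 (by simp)
    have hxf : x f = f := formPerm_apply_of_notMem (by grind)
    rwa [← swap_apply_mul_swap_apply_mem_iff hx_mem, hxb, hxc, hxe, hxf] at hbc_ef
  have hab_ce : swap a b * swap c e ∈ closure {x, y} := by
    have hyc : y c = d := formPerm_apply_lt_getElem _ hyl 0 (by simp)
    have hye : y e = f := formPerm_apply_lt_getElem _ hyl 2 (by simp)
    rwa [← swap_apply_mul_swap_apply_mem_iff hy_mem, hya, hyb, hyc, hye]
  have hab_eg : swap a b * swap e g ∈ closure {x, y} := by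
    have hyd : y d = e := formPerm_apply_lt_getElem _ hyl 1 (by simp)
    have hyf : y f = g := formPerm_apply_lt_getElem _ hyl 3 (by simp)
    rwa [← swap_apply_mul_swap_apply_mem_iff hy_mem, hya, hyb, hyd, hyf] at hab_df
  have hprod : (swap a b * swap c e)⁻¹ * (swap a b * swap e g) = swap e c * swap e g := by
    simp [mul_assoc, swap_comm c e]
  exact hprod ▸ mul_mem (inv_mem hab_ce) hab_eg

variable [Fintype α]

theorem card_support_formPerm_of_nodup (hl : l.Nodup) (hlen : 2 ≤ l.length) :
    l.formPerm.support.card = l.length := by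
  rw [support_formPerm_of_nodup l hl (by rintro p rfl; simp at hlen), toFinset_card_of_nodup hl]

theorem formPerm_mem_alternatingGroup (hl : l.Nodup) (hodd : Odd l.length) :
    l.formPerm ∈ alternatingGroup α := by
  rcases Nat.lt_or_ge l.length 2 with hlen | hlen
  · rw [(formPerm_eq_one_iff _ hl).2 (Nat.le_of_lt_succ hlen)]
    exact one_mem _
  · rw [mem_alternatingGroup, (isCycle_formPerm hl hlen).sign,
      card_support_formPerm_of_nodup hl hlen, hodd.neg_one_pow, neg_neg]

theorem closure_formPerm_pair_le_alternatingGroup {l₁ l₂ : List α} (hl₁ : l₁.Nodup)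
    (hl₂ : l₂.Nodup) (hodd₁ : Odd l₁.length) (hodd₂ : Odd l₂.length) :
    closure {l₁.formPerm, l₂.formPerm} ≤ alternatingGroup α := by
  rw [closure_le, Set.pair_subset_iff]
  exact ⟨formPerm_mem_alternatingGroup hl₁ hodd₁, formPerm_mem_alternatingGroup hl₂ hodd₂⟩

theorem isThreeCycle_formPerm_triple (h : [a, b, c].Nodup) : (formPerm [a, b, c]).IsThreeCycle :=
  card_support_eq_three_iff.1 (card_support_formPerm_of_nodup h (by simp))

theorem alternatingGroup_le_closure_formPerm_triple (h : (a :: b :: c :: d :: l).Nodup)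
    (hmem : ∀ p, p ∈ a :: b :: c :: d :: l) :
    alternatingGroup α ≤ closure {formPerm [a, b, d], formPerm (a :: b :: c :: d :: l)} := by
  have habd : [a, b, d].Nodup := h.sublist (by simp)
  refine alternatingGroup_le_closure_pair_of_apply_eq (p := a)
    (isThreeCycle_formPerm_triple habd) ?_ fun q => h.isCycleOn_formPerm.2 (hmem a) (hmem q)
  rw [formPerm_apply_head _ _ _ habd, formPerm_apply_head _ _ _ h]

theorem alternatingGroup_le_closure_formPerm_quintuple
    (h : (a :: b :: c :: d :: e :: f :: g :: l).Nodup)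
    (hmem : ∀ p, p ∈ a :: b :: c :: d :: e :: f :: g :: l) :
    alternatingGroup α ≤
      closure {formPerm [e, d, c, b, a], formPerm (c :: d :: e :: f :: g :: l)} := by
  set x := formPerm [e, d, c, b, a]
  set y := formPerm (c :: d :: e :: f :: g :: l)
  have hx_mem : x ∈ closure {x, y} := subset_closure (.inl rfl)
  have hy_mem : y ∈ closure {x, y} := subset_closure (.inr rfl)
  have hxl : [e, d, c, b, a].Nodup := by grind
  have hyl : (c :: d :: e :: f :: g :: l).Nodup := h.sublist (by simp)
  have horbit_e : orbit (threeCycleSubgroup (closure {x, y})) e =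
      orbit (threeCycleSubgroup (closure {x, y})) g := by
    have hσ : (swap e c * swap e g).IsThreeCycle :=
      isThreeCycle_swap_mul_swap_same (by grind) (by grind) (by grind)
    have hσe : (swap e c * swap e g) e = g := by
      rw [Perm.mul_apply, swap_apply_left, swap_apply_of_ne_of_ne (by grind) (by grind)]
    rw [← orbit_threeCycleSubgroup_apply (swap_mul_swap_mem_closure_formPerm_quintuple h)
      hσ e, hσe]
  have horbit_x : ∀ p ∈ [e, d, c, b, a], orbit (threeCycleSubgroup (closure {x, y})) p =
      orbit (threeCycleSubgroup (closure {x, y})) g := fun p hp =>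
    orbit_threeCycleSubgroup_eq_of_sameCycle_of_apply_eq_self hx_mem
      (formPerm_apply_of_notMem (by grind)) horbit_e
      (hxl.isCycleOn_formPerm.2 (by simp) hp)
  have horbit_y : ∀ p ∈ c :: d :: e :: f :: g :: l,
      orbit (threeCycleSubgroup (closure {x, y})) p =
        orbit (threeCycleSubgroup (closure {x, y})) c := fun p hp =>
    orbit_threeCycleSubgroup_eq_of_sameCycle hy_mem
      (by rw [formPerm_apply_head _ _ _ hyl, horbit_x d (by simp), horbit_x c (by simp)])
      (hyl.isCycleOn_formPerm.2 (by simp) hp)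
  refine alternatingGroup_le_of_orbit_threeCycleSubgroup_eq g fun p => ?_
  by_cases hp : p ∈ [e, d, c, b, a]
  · exact horbit_x p hp
  · exact (horbit_y p (by grind)).trans (horbit_x c (by simp))

theorem closure_formPerm_triple (h : (a :: b :: c :: d :: l).Nodup)
    (hmem : ∀ p, p ∈ a :: b :: c :: d :: l) (hodd : Odd (a :: b :: c :: d :: l).length) :
    closure {formPerm [a, b, d], formPerm (a :: b :: c :: d :: l)} = alternatingGroup α :=
  le_antisymm
    (closure_formPerm_pair_le_alternatingGroup (h.sublist (by simp)) h ⟨1, rfl⟩ hodd)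
    (alternatingGroup_le_closure_formPerm_triple h hmem)

theorem closure_formPerm_quintuple (h : (a :: b :: c :: d :: e :: f :: g :: l).Nodup)
    (hmem : ∀ p, p ∈ a :: b :: c :: d :: e :: f :: g :: l)
    (hodd : Odd (c :: d :: e :: f :: g :: l).length) :
    closure {formPerm [e, d, c, b, a], formPerm (c :: d :: e :: f :: g :: l)} =
      alternatingGroup α :=
  le_antisymm
    (closure_formPerm_pair_le_alternatingGroup (by grind) (h.sublist (by simp)) ⟨2, rfl⟩ hodd)
    (alternatingGroup_le_closure_formPerm_quintuple h hmem)

end ListCycles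

section Sigma

variable {α : Type*} [Fintype α] [DecidableEq α]

theorem card_support_conj_pow_of_isCycle {σ : Perm α} (hσ : σ.IsCycle) (τ : Perm α) {i : ℕ}
    (hne : τ * σ ^ i * τ⁻¹ ≠ 1) : (τ * σ ^ i * τ⁻¹).support.card = σ.support.card := by
  have hpow : σ ^ i ≠ 1 := by
    rintro h
    simp [h] at hne
  rw [card_support_conj, hσ.support_pow_eq_iff.2 (by rwa [orderOf_dvd_iff_pow_eq_one])]

theorem card_support_of_mem_beauvilleSigmaIn {K : Subgroup (Perm α)} {x y σ : Perm α}
    (hx : x.IsCycle) (hy : y.IsCycle) (hxy : (x * y).IsCycle) (hσ : σ ∈ beauvilleSigmaIn K x y)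
    (hne : σ ≠ 1) :
    σ.support.card = x.support.card ∨ σ.support.card = y.support.card ∨
      σ.support.card = (x * y).support.card := by
  obtain ⟨i, τ, -, rfl | rfl | rfl⟩ := hσ
  · exact .inl (card_support_conj_pow_of_isCycle hx τ hne)
  · exact .inr (.inl (card_support_conj_pow_of_isCycle hy τ hne))
  · exact .inr (.inr (card_support_conj_pow_of_isCycle hxy τ hne))

theorem one_mem_beauvilleSigmaIn {G : Type*} [Group G] (K : Subgroup G) (x y : G) :
    1 ∈ beauvilleSigmaIn K x y :=
  ⟨0, 1, one_mem K, .inl (by simp)⟩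

variable {a b c d e : α} {l : List α} {K : Subgroup (Perm α)} {σ : Perm α}

theorem card_support_of_mem_beauvilleSigmaIn_formPerm_triple (h : (a :: b :: c :: d :: l).Nodup)
    (hσ : σ ∈ beauvilleSigmaIn K (formPerm [a, b, d]) (formPerm (a :: b :: c :: d :: l)))
    (hne : σ ≠ 1) : σ.support.card = 3 ∨ σ.support.card = l.length + 4 := by
  have hx : [a, b, d].Nodup := h.sublist (by simp)
  have hxy : (b :: c :: a :: d :: l).Nodup := by grind
  have hmul := formPerm_triple_mul_formPerm (l := l) (show [a, b, c, d].Nodup by grind)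
  have hcard := card_support_of_mem_beauvilleSigmaIn (isCycle_formPerm hx (by simp))
    (isCycle_formPerm h (by simp)) (hmul ▸ isCycle_formPerm hxy (by simp)) hσ hne
  rw [hmul, card_support_formPerm_of_nodup hx (by simp), card_support_formPerm_of_nodup h (by simp),
    card_support_formPerm_of_nodup hxy (by simp)] at hcard
  simpa using hcard

theorem card_support_of_mem_beauvilleSigmaIn_formPerm_quintuple
    (h : (a :: b :: c :: d :: e :: l).Nodup)
    (hσ : σ ∈ beauvilleSigmaIn K (formPerm [e, d, c, b, a]) (formPerm (c :: d :: e :: l)))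
    (hne : σ ≠ 1) : σ.support.card = 5 ∨ σ.support.card = l.length + 3 := by
  have hx : [e, d, c, b, a].Nodup := by grind
  have hy : (c :: d :: e :: l).Nodup := h.sublist (by simp)
  have hxy : (b :: a :: e :: l).Nodup := by grind
  have hmul := formPerm_quintuple_mul_formPerm (l := l) (show [a, b, c, d, e].Nodup by grind)
  have hcard := card_support_of_mem_beauvilleSigmaIn (isCycle_formPerm hx (by simp))
    (isCycle_formPerm hy (by simp)) (hmul ▸ isCycle_formPerm hxy (by simp)) hσ hne
  rw [hmul, card_support_formPerm_of_nodup hx (by simp),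
    card_support_formPerm_of_nodup hy (by simp), card_support_formPerm_of_nodup hxy (by simp)]
    at hcard
  simpa using hcard

end Sigma

theorem finRange_eq_cons_drop {n : ℕ} [NeZero n] (hn : 7 ≤ n) :
    finRange n = 0 :: 1 :: 2 :: 3 :: 4 :: 5 :: 6 :: (finRange n).drop 7 := by
  have hmod : ∀ k < 7, k % n = k := fun k hk => Nat.mod_eq_of_lt (hk.trans_le hn)
  refine List.ext_getElem (by simp; omega) fun i _ _ => ?_
  rcases i with _ | _ | _ | _ | _ | _ | _ | i <;> simp [Fin.ext_iff, hmod]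
  omega

theorem alternatingGroup_odd_beauville_structure_general {α : Type*} [Fintype α] [DecidableEq α]
    {a b c d e f g : α} {l : List α} (h : (a :: b :: c :: d :: e :: f :: g :: l).Nodup)
    (hmem : ∀ p, p ∈ a :: b :: c :: d :: e :: f :: g :: l)
    (hodd : Odd (a :: b :: c :: d :: e :: f :: g :: l).length) :
    IsBeauvilleStructureFor (alternatingGroup α)
      (formPerm [a, b, d]) (formPerm (a :: b :: c :: d :: e :: f :: g :: l))
      (formPerm [e, d, c, b, a]) (formPerm (c :: d :: e :: f :: g :: l)) := by
  refine ⟨closure_formPerm_triple h hmem hodd, closure_formPerm_quintuple h hmem (by grind),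
    Set.eq_singleton_iff_unique_mem.2
      ⟨⟨one_mem_beauvilleSigmaIn .., one_mem_beauvilleSigmaIn ..⟩, fun σ ⟨hσ₁, hσ₂⟩ => ?_⟩⟩
  by_contra hne
  have h₁ := card_support_of_mem_beauvilleSigmaIn_formPerm_triple h hσ₁ hne
  have h₂ := card_support_of_mem_beauvilleSigmaIn_formPerm_quintuple (by grind) hσ₂ hne
  simp only [length_cons] at h₁ h₂
  omega

/-- for odd `n ≥ 7`, the pairs `x₁ = (1,2,4)`, `y₁ = (1,2,3,…,n)` and
`x₂ = (5,4,3,2,1)`, `y₂ = (3,4,5,…,n)` form a Beauville structure for `A_n`.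
Points `1,…,n` are modelled by `Fin n` (zero-based) and cycles by `List.formPerm`. -/
theorem alternatingGroup_odd_beauville_structure
    (n : ℕ) [NeZero n] (hn : 7 ≤ n) (hodd : Odd n)
    (x₁ y₁ x₂ y₂ : Equiv.Perm (Fin n))
    (hx₁ : x₁ = List.formPerm [(0 : Fin n), 1, 3])
    (hy₁ : y₁ = List.formPerm (List.finRange n))
    (hx₂ : x₂ = List.formPerm [(4 : Fin n), 3, 2, 1, 0])
    (hy₂ : y₂ = List.formPerm ((List.finRange n).drop 2)) :
    IsBeauvilleStructureFor (alternatingGroup (Fin n)) x₁ y₁ x₂ y₂ := by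
  have hfin := finRange_eq_cons_drop hn
  have hnd : (finRange n).Nodup := nodup_finRange n
  have hmem : ∀ p, p ∈ finRange n := mem_finRange
  have hlen : Odd (finRange n).length := by rwa [length_finRange]
  rw [hx₁, hy₁, hx₂, hy₂]
  rw [hfin] at hnd hmem hlen ⊢
  exact alternatingGroup_odd_beauville_structure_general hnd hmem hlen
end

section
/- Let n ≥ 8 be even, and in the alternating group A_n on {1,…,n} let x₁ = (1,2)(3,4) and y₁ = (2,3,4,…,n). Then there exist no automorphism φ of A_n and element g ∈ A_n such that gφ(x₁)g⁻¹ = x₁⁻¹ and gφ(y₁)g⁻¹ = y₁⁻¹. -/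
/-!
Number the points from `0`, so that `x = (0 1)(2 3)` while `y` fixes `0` and sends `i` to `i + 1`
for `1 ≤ i ≤ 5`, and write `cₖ = yᵏ x y⁻ᵏ`. Since `c₁ = (0 2)(3 4)` and `c₃ = (0 4)(5 6)`, the
conjugate `c₁ c₃ c₁⁻¹ = (2 3)(5 6)` commutes with `c₀ = (0 1)(2 3)`. A homomorphism inverting both
`x` and `y` turns this, after conjugation by `y³`, into the assertion that
`c₂⁻¹ c₀ c₂ = (0 2)(1 3)` commutes with `c₃`. But the two products send `0` to `2` and to `4`.
-/

open Equiv

theorem commute_pow_conj_of_map_eq_inv {G : Type*} [Group G] {H : Subgroup G} {x y : H}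
    {ψ : H →* G} (hx : ψ x = (x : G)⁻¹) (hy : ψ y = (y : G)⁻¹) {i k : ℕ}
    (h : Commute (x : G) (((y : G) ^ i * x * ((y : G) ^ i)⁻¹) *
      ((y : G) ^ (i + k) * x * ((y : G) ^ (i + k))⁻¹) * ((y : G) ^ i * x * ((y : G) ^ i)⁻¹)⁻¹)) :
    Commute ((y : G) ^ (i + k) * x * ((y : G) ^ (i + k))⁻¹)
      (((y : G) ^ k * x * ((y : G) ^ k)⁻¹)⁻¹ * x * ((y : G) ^ k * x * ((y : G) ^ k)⁻¹)) := by
  have commute_in_subgroup : Commute x ((y ^ i * x * (y ^ i)⁻¹) *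
      (y ^ (i + k) * x * (y ^ (i + k))⁻¹) * (y ^ i * x * (y ^ i)⁻¹)⁻¹) :=
    Subtype.ext h.eq
  have inverted := (commute_in_subgroup.map ψ).inv_inv
  simp only [map_mul, map_inv, map_pow, hx, hy] at inverted
  convert (Commute.conj_iff ((y : G) ^ (i + k))).2 inverted using 1 <;> group

theorem conj_swap_mul_swap {α : Type*} [DecidableEq α] (σ : Perm α) (p q r s : α) :
    σ * (swap p q * swap r s) * σ⁻¹ = swap (σ p) (σ q) * swap (σ r) (σ s) := by
  simp only [swap_apply_apply]
  group

section

variable {α : Type*} [DecidableEq α] {a : Fin 7 → α}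

theorem pow_conj_swap_mul_swap {y : Perm α} (hy₀ : y (a 0) = a 0)
    (hy : ∀ i (hi : i + 1 < 7), 1 ≤ i → y (a ⟨i, by omega⟩) = a ⟨i + 1, hi⟩) {k : ℕ}
    (hk : 3 + k < 7) :
    y ^ k * (swap (a 0) (a 1) * swap (a 2) (a 3)) * (y ^ k)⁻¹ =
      swap (a 0) (a ⟨1 + k, by omega⟩) * swap (a ⟨2 + k, by omega⟩) (a ⟨3 + k, hk⟩) := by
  induction k with
  | zero => simp
  | succ k ih =>
    calc
      _ = y * (y ^ k * (swap (a 0) (a 1) * swap (a 2) (a 3)) * (y ^ k)⁻¹) * y⁻¹ := by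
        rw [pow_succ']
        group
      _ = _ := by
        rw [ih (by omega), conj_swap_mul_swap, hy₀, hy (1 + k) (by omega) (by omega),
          hy (2 + k) (by omega) (by omega), hy (3 + k) (by omega) (by omega)]
        rfl

theorem commute_swap_mul_swap_conj (ha : Function.Injective a) :
    Commute (swap (a 0) (a 1) * swap (a 2) (a 3))
      ((swap (a 0) (a 2) * swap (a 3) (a 4)) * (swap (a 0) (a 4) * swap (a 5) (a 6)) *
        (swap (a 0) (a 2) * swap (a 3) (a 4))⁻¹) := by
  have conj_eq : (swap (a 0) (a 2) * swap (a 3) (a 4)) * (swap (a 0) (a 4) * swap (a 5) (a 6)) *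
      (swap (a 0) (a 2) * swap (a 3) (a 4))⁻¹ = swap (a 2) (a 3) * swap (a 5) (a 6) := by
    rw [conj_swap_mul_swap]
    simp only [Perm.mul_apply, ha.swap_apply]
    rfl
  have disjoint_swap {i j k l : Fin 7} (h : [i, j, k, l].Nodup) :
      Commute (swap (a i) (a j)) (swap (a k) (a l)) := by
    refine (Perm.disjoint_swap_swap ?_).commute
    simpa using h.map ha
  rw [conj_eq]
  exact ((disjoint_swap (by decide)).mul_right (disjoint_swap (by decide))).mul_left
    ((Commute.refl _).mul_right (disjoint_swap (by decide)))

theorem not_commute_swap_mul_swap_conj (ha : Function.Injective a) :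
    ¬ Commute (swap (a 0) (a 4) * swap (a 5) (a 6))
      ((swap (a 0) (a 3) * swap (a 4) (a 5))⁻¹ * (swap (a 0) (a 1) * swap (a 2) (a 3)) *
        (swap (a 0) (a 3) * swap (a 4) (a 5))) := by
  intro h
  have images_eq := Perm.congr_fun h.eq (a 0)
  simp only [mul_inv_rev, swap_inv, Perm.mul_apply, ha.swap_apply] at images_eq
  exact absurd (ha images_eq) (by decide)

theorem alternatingGroup_even_first_pair_not_invertible_general (ha : Function.Injective a)
    {H : Subgroup (Perm α)} {x y : H} (hx : (x : Perm α) = swap (a 0) (a 1) * swap (a 2) (a 3))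
    (hy₀ : (y : Perm α) (a 0) = a 0)
    (hy : ∀ i (hi : i + 1 < 7), 1 ≤ i → (y : Perm α) (a ⟨i, by omega⟩) = a ⟨i + 1, hi⟩) :
    ¬ ∃ ψ : H →* Perm α, ψ x = (x : Perm α)⁻¹ ∧ ψ y = (y : Perm α)⁻¹ := by
  rintro ⟨ψ, hψx, hψy⟩
  have conj_eq {k : ℕ} (hk : 3 + k < 7) :
      (y : Perm α) ^ k * x * ((y : Perm α) ^ k)⁻¹ =
        swap (a 0) (a ⟨1 + k, by omega⟩) * swap (a ⟨2 + k, by omega⟩) (a ⟨3 + k, hk⟩) :=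
    hx ▸ pow_conj_swap_mul_swap hy₀ hy hk
  have relation : Commute (x : Perm α) (((y : Perm α) ^ 1 * x * ((y : Perm α) ^ 1)⁻¹) *
      ((y : Perm α) ^ (1 + 2) * x * ((y : Perm α) ^ (1 + 2))⁻¹) *
      ((y : Perm α) ^ 1 * x * ((y : Perm α) ^ 1)⁻¹)⁻¹) := by
    rw [conj_eq (by norm_num), conj_eq (by norm_num), hx]
    exact commute_swap_mul_swap_conj ha
  have reversed := commute_pow_conj_of_map_eq_inv hψx hψy relation
  rw [conj_eq (by norm_num), conj_eq (by norm_num), hx] at reversed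
  exact not_commute_swap_mul_swap_conj ha reversed

end

theorem formPerm_drop_finRange_apply_of_lt {n m : ℕ} {i : Fin n} (hi : i < m) :
    ((List.finRange n).drop m).formPerm i = i := by
  refine List.formPerm_apply_of_notMem fun hmem => ?_
  obtain ⟨j, hj, rfl⟩ := List.getElem_of_mem hmem
  simp at hi

theorem formPerm_drop_finRange_apply_of_le {n m i : ℕ} (hm : m ≤ i) (hi : i + 1 < n) :
    ((List.finRange n).drop m).formPerm ⟨i, by omega⟩ = ⟨i + 1, hi⟩ := by
  have nodup : ((List.finRange n).drop m).Nodup := (List.nodup_finRange n).drop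
  obtain ⟨j, rfl⟩ := Nat.exists_eq_add_of_le hm
  have apply_getElem := List.formPerm_apply_lt_getElem _ nodup j (by simp; omega)
  simp only [List.getElem_drop, List.getElem_finRange, Fin.cast_mk] at apply_getElem
  exact apply_getElem

theorem castLE_eq_ofNat {m n : ℕ} [NeZero n] (h : m ≤ n) (i : Fin m) :
    Fin.castLE h i = Fin.ofNat n i :=
  Fin.ext (Nat.mod_eq_of_lt (i.isLt.trans_le h)).symm

/-- for even `n ≥ 8`, with `x₁ = (1,2)(3,4)` and `y₁ = (2,3,4,…,n)` in `A_n`,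
there is no automorphism `φ` of `A_n` and element `g ∈ A_n` with
`g * φ x₁ * g⁻¹ = x₁⁻¹` and `g * φ y₁ * g⁻¹ = y₁⁻¹`.
Points `1,…,n` are modelled by `Fin n` (zero-based). -/
theorem alternatingGroup_even_first_pair_not_invertible
    (n : ℕ) [NeZero n] (hn : 8 ≤ n) (heven : Even n)
    (x₁ y₁ : Equiv.Perm (Fin n))
    (hx₁ : x₁ = Equiv.swap (0 : Fin n) 1 * Equiv.swap 2 3)
    (hy₁ : y₁ = List.formPerm ((List.finRange n).drop 1))
    (hx₁A : x₁ ∈ alternatingGroup (Fin n)) (hy₁A : y₁ ∈ alternatingGroup (Fin n)) :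
    ¬ ∃ (φ : alternatingGroup (Fin n) ≃* alternatingGroup (Fin n))
        (g : alternatingGroup (Fin n)),
        g * φ ⟨x₁, hx₁A⟩ * g⁻¹ = (⟨x₁, hx₁A⟩ : alternatingGroup (Fin n))⁻¹ ∧
        g * φ ⟨y₁, hy₁A⟩ * g⁻¹ = (⟨y₁, hy₁A⟩ : alternatingGroup (Fin n))⁻¹ := by
  rintro ⟨φ, g, hx, hy⟩
  refine alternatingGroup_even_first_pair_not_invertible_general
    (Fin.castLE_injective (by omega : 7 ≤ n)) (x := ⟨x₁, hx₁A⟩) (y := ⟨y₁, hy₁A⟩) ?_ ?_ ?_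
    ⟨(alternatingGroup (Fin n)).subtype.comp ((MulAut.conj g).toMonoidHom.comp φ.toMonoidHom),
      congrArg Subtype.val hx, congrArg Subtype.val hy⟩
  · simp only [castLE_eq_ofNat, hx₁]
    rfl
  · simpa only [hy₁] using formPerm_drop_finRange_apply_of_lt (by simp)
  · intro i hi one_le
    simpa only [hy₁, Fin.castLE_mk] using
      formPerm_drop_finRange_apply_of_le one_le (by omega)
end

section
/- Let n ≥ 8 be even, and in the alternating group A_n on {1,…,n} let x₂ = (1,2,3)(4,5,…,n) and y₂ = (5,4,3,2,1). Then x₂ and y₂ generate A_n, and their product x₂y₂ = (3,5,6,…,n) is an (n−3)-cycle. -/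
/-!
List the points as `a, b, c, d, e, …` and put `x = (a b c)(d e …)` and `y = (e d c b a)`, so that
`y * x = (c e …)`. Since `x ^ 3 = (d e …) ^ 3`, and `y * x` is conjugate to `(d e …)` by the
transposition `(c d)`, the element `(y * x) ^ 3 * (x ^ 3)⁻¹` is the commutator of `(c d)` with a
permutation that fixes `c` and moves `d`, hence a 3-cycle. The group generated by `x` and `y` is
primitive: by means of `y`, a block containing `a` and another point contains `a` and a point of the
cycle `y * x`; as `y * x` fixes `a`, the block contains that whole cycle, in particular `e`, so it
is invariant under `y⁻¹ : e ↦ a` and contains `b` and `d` too. Jordan's theorem on 3-cycles applies.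
-/

open Equiv Equiv.Perm MulAction
open scoped Pointwise

section Blocks

variable {α : Type*} {G : Subgroup (Perm α)} {B : Set α} {p q r : α} {σ : Perm α}

theorem apply_mem_of_isBlock (hB : IsBlock G B) (hσ : σ ∈ G) (hp : p ∈ B) (hσp : σ p ∈ B)
    (hq : q ∈ B) : σ q ∈ B := by
  have hsmul : (⟨σ, hσ⟩ : G) • B = B := isBlock_iff_smul_eq_of_mem.mp hB hp hσp
  exact hsmul ▸ Set.smul_mem_smul_set hq

theorem mem_of_isBlock_of_sameCycle (hB : IsBlock G B) (hσ : σ ∈ G) (hp : p ∈ B) (hσp : σ p = p)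
    (hq : q ∈ B) (hqr : σ.SameCycle q r) : r ∈ B := by
  obtain ⟨k, rfl⟩ := hqr
  have hσkp : (σ ^ k) p = p := zpow_apply_eq_self_of_apply_eq_self hσp k
  exact apply_mem_of_isBlock hB (G.zpow_mem hσ k) hp (hσkp.symm ▸ hp) hq

end Blocks

theorem isThreeCycle_swap_conj_mul_inv {α : Type*} [Fintype α] [DecidableEq α] {σ : Perm α}
    {i j : α} (hi : σ i = i) (hj : σ j ≠ j) :
    (swap i j * σ * (swap i j)⁻¹ * σ⁻¹).IsThreeCycle := by
  have hij : i ≠ j := by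
    rintro rfl
    exact hj hi
  have hiσj : i ≠ σ j := fun h ↦ hij (σ.injective (hi.trans h))
  have hprod : swap i j * σ * (swap i j)⁻¹ * σ⁻¹ = swap i j * swap i (σ j) := by
    rw [swap_inv, mul_assoc, mul_assoc, ← mul_assoc σ, ← swap_apply_apply, hi]
  exact hprod ▸ isThreeCycle_swap_mul_swap_same hij hiσj hj.symm

section FormPerm

variable {α : Type*} [DecidableEq α] {a b c d e : α} {l : List α}

theorem sign_formPerm_cons [Fintype α] (h : (a :: l).Nodup) :
    sign (List.formPerm (a :: l)) = (-1) ^ l.length := by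
  induction l generalizing a with
  | nil => simp
  | cons b l ih =>
    have hab : a ≠ b := List.ne_of_not_mem_cons h.notMem
    rw [List.formPerm_cons_cons, map_mul, sign_swap hab, ih h.of_cons, List.length_cons, pow_succ']

theorem card_support_formPerm_cons_cons [Fintype α] (h : (a :: b :: l).Nodup) :
    (List.formPerm (a :: b :: l)).support.card = l.length + 2 := by
  rw [List.support_formPerm_of_nodup _ h (by simp), List.toFinset_card_of_nodup h,
    List.length_cons, List.length_cons]

theorem formPerm_cons_eq_swap_conj (h : (a :: b :: c :: l).Nodup) :
    List.formPerm (a :: c :: l) = swap a b * List.formPerm (b :: c :: l) * (swap a b)⁻¹ := by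
  obtain ⟨ha, hb, -⟩ : a ∉ b :: c :: l ∧ b ∉ c :: l ∧ _ := by simpa only [List.nodup_cons] using h
  have hca : c ≠ a := by grind
  have hcb : c ≠ b := by grind
  set ρ := List.formPerm (c :: l)
  have hρa : ρ a = a := List.formPerm_apply_of_notMem (List.not_mem_of_not_mem_cons ha)
  have hρb : ρ b = b := List.formPerm_apply_of_notMem hb
  have hcomm : ρ * swap a b = swap a b * ρ := by rw [mul_swap_eq_swap_mul, hρa, hρb]
  calc
    List.formPerm (a :: c :: l) = swap a c * ρ := List.formPerm_cons_cons a c l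
    _ = swap a b * swap b c * swap a b * ρ := by
      rw [swap_comm a b, swap_comm b c, swap_mul_swap_mul_swap hcb hca, swap_comm]
    _ = swap a b * (swap b c * ρ) * (swap a b)⁻¹ := by
      rw [swap_inv, mul_assoc _ _ ρ, ← hcomm]
      simp only [mul_assoc]

theorem formPerm_five_mul_three_mul_eq (hcd : c ≠ d) (hce : c ≠ e) :
    List.formPerm [e, d, c, b, a] * (List.formPerm [a, b, c] * List.formPerm (d :: e :: l)) =
      List.formPerm (c :: e :: l) := by
  have hab : swap b a * swap a b = 1 := by rw [swap_comm, swap_mul_self]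
  have hbc : swap c b * swap b c = 1 := by rw [swap_comm, swap_mul_self]
  simp only [List.formPerm_cons_cons, List.formPerm_singleton, mul_one]
  calc
    _ = swap e d * swap d c * (swap c b * (swap b a * swap a b) * swap b c) * swap d e *
          List.formPerm (e :: l) := by group
    _ = swap d e * swap c d * swap d e * List.formPerm (e :: l) := by
      rw [hab, mul_one, hbc, mul_one, swap_comm e d, swap_comm d c]
    _ = swap c e * List.formPerm (e :: l) := by
      rw [swap_mul_swap_mul_swap hcd hce, swap_comm]

theorem isThreeCycle_formPerm_pow_three_mul_inv [Fintype α]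
    (h : (c :: d :: e :: l).Nodup) (hl : 2 ≤ l.length) :
    (List.formPerm (c :: e :: l) ^ 3 * (List.formPerm (d :: e :: l) ^ 3)⁻¹).IsThreeCycle := by
  set τ := List.formPerm (d :: e :: l) with hτ
  have hτc : (τ ^ 3) c = c :=
    pow_apply_eq_self_of_apply_eq_self (List.formPerm_apply_of_notMem h.notMem) 3
  have hτd : (τ ^ 3) d ≠ d := by
    have hlen : 3 % (d :: e :: l).length = 3 := Nat.mod_eq_of_lt (by simp; lia)
    rw [hτ, List.formPerm_pow_apply_head d (e :: l) h.of_cons]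
    simp only [hlen, List.getElem_cons_succ]
    exact ne_of_mem_of_not_mem (List.getElem_mem hl) (by grind)
  rw [formPerm_cons_eq_swap_conj h, conj_pow]
  exact isThreeCycle_swap_conj_mul_inv hτc hτd

theorem sign_formPerm_three_mul [Fintype α] (habc : [a, b, c].Nodup) (hdl : (d :: l).Nodup) :
    sign (List.formPerm [a, b, c] * List.formPerm (d :: l)) = (-1) ^ l.length := by
  have hthree : sign (List.formPerm [a, b, c]) = 1 :=
    (sign_formPerm_cons habc).trans even_two.neg_one_pow
  rw [map_mul, hthree, sign_formPerm_cons hdl, one_mul]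

variable (h : (a :: b :: c :: d :: e :: l).Nodup)
include h

theorem formPerm_three_mul_pow_three_eq :
    (List.formPerm [a, b, c] * List.formPerm (d :: e :: l)) ^ 3 =
      List.formPerm (d :: e :: l) ^ 3 := by
  obtain ⟨habc, hdel, hdisj⟩ := List.nodup_append'.mp (show ([a, b, c] ++ d :: e :: l).Nodup from h)
  have hcomm : Commute (List.formPerm [a, b, c]) (List.formPerm (d :: e :: l)) :=
    ((List.formPerm_disjoint_iff habc hdel (by simp) (by simp)).mpr hdisj).commute
  have hone : List.formPerm [a, b, c] ^ 3 = 1 := List.formPerm_pow_length_eq_one_of_nodup _ habc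
  rw [hcomm.mul_pow, hone, one_mul]

section Subgroup

variable {G : Subgroup (Perm α)}

theorem eq_univ_of_isBlock_of_formPerm_mem (hmem : ∀ i, i ∈ a :: b :: c :: d :: e :: l)
    (hη : List.formPerm [a, b, c, d, e] ∈ G) (hκ : List.formPerm (c :: e :: l) ∈ G)
    {B : Set α} (hB : IsBlock G B) (ha : a ∈ B) {q : α} (hq : q ∈ B) (hqtail : q ∈ c :: e :: l) :
    B = Set.univ := by
  have hnodup : [a, b, c, d, e].Nodup := h.sublist (List.sublist_append_left [a, b, c, d, e] l)
  have hcel : (c :: e :: l).Nodup := h.of_cons.of_cons.sublist (by simp)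
  set η := List.formPerm [a, b, c, d, e]
  set κ := List.formPerm (c :: e :: l)
  have hηa : η a = b := List.formPerm_apply_lt_getElem _ hnodup 0 (by simp)
  have hηc : η c = d := List.formPerm_apply_lt_getElem _ hnodup 2 (by simp)
  have hηe : η e = a := List.formPerm_apply_getLast a [b, c, d, e]
  have hκa : κ a = a := List.formPerm_apply_of_notMem (by grind)
  have htail {i : α} (hi : i ∈ c :: e :: l) : i ∈ B :=
    mem_of_isBlock_of_sameCycle hB hκ ha hκa hq (hcel.isCycleOn_formPerm.2 hqtail hi)
  have hη_mem {i : α} (hi : i ∈ B) : η i ∈ B :=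
    apply_mem_of_isBlock hB hη (htail (i := e) (by simp)) (hηe ▸ ha) hi
  have hb : b ∈ B := hηa ▸ hη_mem ha
  have hd : d ∈ B := hηc ▸ hη_mem (htail (by simp))
  refine Set.eq_univ_of_forall fun i ↦ ?_
  have := hmem i
  grind

theorem isPreprimitive_of_formPerm_mem (hmem : ∀ i, i ∈ a :: b :: c :: d :: e :: l)
    (hη : List.formPerm [a, b, c, d, e] ∈ G) (hκ : List.formPerm (c :: e :: l) ∈ G) :
    IsPreprimitive G α := by
  have hnodup : [a, b, c, d, e].Nodup := h.sublist (List.sublist_append_left [a, b, c, d, e] l)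
  set η := List.formPerm [a, b, c, d, e]
  have hηa : η a = b := List.formPerm_apply_lt_getElem _ hnodup 0 (by simp)
  have hηb : η b = c := List.formPerm_apply_lt_getElem _ hnodup 1 (by simp)
  have hηd : η d = e := List.formPerm_apply_lt_getElem _ hnodup 3 (by simp)
  have hηe : η e = a := List.formPerm_apply_getLast a [b, c, d, e]
  have hηηa : (η ^ 2) a = c := by rw [pow_two, mul_apply, hηa, hηb]
  have hηηd : (η ^ 2) d = a := by rw [pow_two, mul_apply, hηd, hηe]
  have hafix : a ∉ fixedPoints G α := fun ha ↦
    have hηa_self : η a = a := ha ⟨η, hη⟩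
    List.ne_of_not_mem_cons h.notMem (hηa_self.symm.trans hηa)
  refine IsPreprimitive.of_isTrivialBlock_of_notMem_fixedPoints hafix fun B ha hB ↦ ?_
  have htail {q : α} (hqtail : q ∈ c :: e :: l) (hq : q ∈ B) : B = Set.univ :=
    eq_univ_of_isBlock_of_formPerm_mem h hmem hη hκ hB ha hq hqtail
  refine or_iff_not_imp_left.mpr fun hnontriv ↦ ?_
  obtain ⟨q, hq, hqa⟩ := (Set.not_subsingleton_iff.mp hnontriv).exists_ne a
  obtain rfl | rfl | rfl | hqtail : q = b ∨ q = c ∨ q = d ∨ q ∈ e :: l := by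
    simpa only [List.mem_cons, hqa, false_or] using hmem q
  · exact htail (by simp) (hηb ▸ apply_mem_of_isBlock hB hη ha (hηa ▸ hq) hq)
  · exact htail (by simp) hq
  · exact htail (by simp)
      (hηηa ▸ apply_mem_of_isBlock hB (G.pow_mem hη 2) hq (hηηd ▸ ha) ha)
  · exact htail (List.mem_cons_of_mem c hqtail) hq

theorem alternatingGroup_le_of_formPerm_mem [Fintype α] (hl : 2 ≤ l.length)
    (hmem : ∀ i, i ∈ a :: b :: c :: d :: e :: l)
    (hx : List.formPerm [a, b, c] * List.formPerm (d :: e :: l) ∈ G)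
    (hy : List.formPerm [e, d, c, b, a] ∈ G) :
    alternatingGroup α ≤ G := by
  have hη : List.formPerm [a, b, c, d, e] ∈ G := by
    rw [← inv_mem_iff, ← List.formPerm_reverse]
    exact hy
  have hcd : c ≠ d := List.ne_of_not_mem_cons h.of_cons.of_cons.notMem
  have hce : c ≠ e :=
    List.ne_of_not_mem_cons (List.not_mem_of_not_mem_cons h.of_cons.of_cons.notMem)
  have hκ : List.formPerm (c :: e :: l) ∈ G :=
    formPerm_five_mul_three_mul_eq hcd hce ▸ G.mul_mem hy hx
  have hτ : List.formPerm (d :: e :: l) ^ 3 ∈ G :=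
    formPerm_three_mul_pow_three_eq h ▸ G.pow_mem hx 3
  exact alternatingGroup_le_of_isPreprimitive_of_isThreeCycle_mem
    (isPreprimitive_of_formPerm_mem h hmem hη hκ)
    (isThreeCycle_formPerm_pow_three_mul_inv h.of_cons.of_cons hl)
    (G.mul_mem (G.pow_mem hκ 3) (G.inv_mem hτ))

end Subgroup

theorem closure_formPerm_eq_alternatingGroup_iff [Fintype α] (hl : 2 ≤ l.length)
    (hmem : ∀ i, i ∈ a :: b :: c :: d :: e :: l) :
    Subgroup.closure {List.formPerm [a, b, c] * List.formPerm (d :: e :: l),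
      List.formPerm [e, d, c, b, a]} = alternatingGroup α ↔ Even (l.length + 1) := by
  set x := List.formPerm [a, b, c] * List.formPerm (d :: e :: l)
  set y := List.formPerm [e, d, c, b, a]
  have hsx : sign x = (-1) ^ (l.length + 1) :=
    sign_formPerm_three_mul (h.sublist (List.sublist_append_left [a, b, c] (d :: e :: l)))
      h.of_cons.of_cons.of_cons
  have hsy : sign y = 1 :=
    (sign_formPerm_cons (List.nodup_reverse.mpr
      (h.sublist (List.sublist_append_left [a, b, c, d, e] l)))).trans
      (Even.neg_one_pow (n := 4) (by decide))
  have hle : alternatingGroup α ≤ Subgroup.closure {x, y} :=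
    alternatingGroup_le_of_formPerm_mem h hl hmem
      (Subgroup.subset_closure (by simp [x])) (Subgroup.subset_closure (by simp [y]))
  calc
    Subgroup.closure {x, y} = alternatingGroup α ↔ Subgroup.closure {x, y} ≤ alternatingGroup α :=
      hle.ge_iff_eq'.symm
    _ ↔ sign x = 1 ∧ sign y = 1 := by
      simp [Set.insert_subset_iff, mem_alternatingGroup]
    _ ↔ Even (l.length + 1) := by
      rw [hsx, hsy, and_iff_left rfl, neg_one_pow_eq_one_iff_even (by decide)]

end FormPerm

theorem finRange_eq_cons {n : ℕ} [NeZero n] (hn : 5 ≤ n) :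
    List.finRange n = 0 :: 1 :: 2 :: 3 :: 4 :: (List.finRange n).drop 5 := by
  have hdrop (i : ℕ) (hi : i < n) :
      (List.finRange n).drop i = Fin.ofNat n i :: (List.finRange n).drop (i + 1) := by
    rw [List.drop_eq_getElem_cons (by simpa)]
    simp [Fin.ext_iff, Nat.mod_eq_of_lt hi]
  calc
    List.finRange n = (List.finRange n).drop 0 := List.drop_zero.symm
    _ = _ := by
      rw [hdrop 0 (by lia), hdrop 1 (by lia), hdrop 2 (by lia), hdrop 3 (by lia), hdrop 4 (by lia)]
      rfl

theorem alternatingGroup_even_second_pair_general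
    (n : ℕ) [NeZero n] (hn : 7 ≤ n) (x₂ y₂ : Equiv.Perm (Fin n))
    (hx₂ : x₂ = List.formPerm [(0 : Fin n), 1, 2] * List.formPerm ((List.finRange n).drop 3))
    (hy₂ : y₂ = List.formPerm [(4 : Fin n), 3, 2, 1, 0]) :
    alternatingGroup (Fin n) ≤ Subgroup.closure {x₂, y₂} ∧
    (Subgroup.closure {x₂, y₂} = alternatingGroup (Fin n) ↔ Even n) ∧
    y₂ * x₂ = List.formPerm ((2 : Fin n) :: (List.finRange n).drop 4) ∧
    (y₂ * x₂).IsCycle ∧ (y₂ * x₂).support.card = n - 3 := by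
  set l := (List.finRange n).drop 5 with hl
  have hlen : l.length = n - 5 := by rw [hl, List.length_drop, List.length_finRange]
  have hlist : List.finRange n = 0 :: 1 :: 2 :: 3 :: 4 :: l := finRange_eq_cons (by lia)
  have hnodup : ((0 : Fin n) :: 1 :: 2 :: 3 :: 4 :: l).Nodup := hlist ▸ List.nodup_finRange n
  have hmem (i : Fin n) : i ∈ 0 :: 1 :: 2 :: 3 :: 4 :: l := hlist ▸ List.mem_finRange i
  have hcycle : ((2 : Fin n) :: 4 :: l).Nodup := hnodup.of_cons.of_cons.sublist (by simp)
  have hdrop₃ : (List.finRange n).drop 3 = 3 :: 4 :: l := by rw [hlist]; rfl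
  have hdrop₄ : (List.finRange n).drop 4 = 4 :: l := by rw [hlist]; rfl
  have hprod : y₂ * x₂ = List.formPerm (2 :: 4 :: l) := by
    rw [hx₂, hy₂, hdrop₃]
    exact formPerm_five_mul_three_mul_eq (by grind) (by grind)
  have hparity : Even (l.length + 1) ↔ Even n := by grind
  rw [hdrop₄, hprod, card_support_formPerm_cons_cons hcycle, ← hparity, hx₂, hy₂, hdrop₃]
  have hl₂ : 2 ≤ l.length := by lia
  exact ⟨alternatingGroup_le_of_formPerm_mem hnodup hl₂ hmem
      (Subgroup.subset_closure (by simp)) (Subgroup.subset_closure (by simp)),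
    closure_formPerm_eq_alternatingGroup_iff hnodup hl₂ hmem, rfl,
    List.isCycle_formPerm hcycle (by simp), by lia⟩

/-- for even `n ≥ 8`, in `A_n` the elements `x₂ = (1,2,3)(4,5,…,n)` and
`y₂ = (5,4,3,2,1)` generate `A_n`, and their product `x₂y₂ = (3,5,6,…,n)` is an
`(n−3)`-cycle.  Points `1,…,n` are modelled by `Fin n` (zero-based), cycles by
`List.formPerm`, and since Mathlib's permutation product applies the right-hand
factor first, the paper's product `x₂y₂` (apply `x₂` first) is `y₂ * x₂`. -/
theorem alternatingGroup_even_second_pair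
    (n : ℕ) [NeZero n] (hn : 8 ≤ n) (heven : Even n)
    (x₂ y₂ : Equiv.Perm (Fin n))
    (hx₂ : x₂ = List.formPerm [(0 : Fin n), 1, 2] * List.formPerm ((List.finRange n).drop 3))
    (hy₂ : y₂ = List.formPerm [(4 : Fin n), 3, 2, 1, 0]) :
    Subgroup.closure {x₂, y₂} = alternatingGroup (Fin n) ∧
    y₂ * x₂ = List.formPerm ((2 : Fin n) :: (List.finRange n).drop 4) ∧
    (y₂ * x₂).IsCycle ∧ (y₂ * x₂).support.card = n - 3 := by
  have ⟨_, hclosure, hprod⟩ := alternatingGroup_even_second_pair_general n (by lia) x₂ y₂ hx₂ hy₂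
  exact ⟨hclosure.mpr heven, hprod⟩
end
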